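/- arXiv:2406.17857 — 4 statements merged into one kernel-verified Lean document; each statement's English description precedes it below -/
import Mathlib

section
/- Let 𝔽 be a field of characteristic different from 2, let V be an n-dimensional 𝔽-vector space, and let k be a positive integer with k < n/2. If L is a subspace of ⋀^k V such that x ∧ y = 0 for all x, y ∈ L, and dim L = C(n−1, k−1), then there exists a nonzero 1-form v ∈ V with v ∧ x = 0 for all x ∈ L. -/
/-! The proof works with coordinates in the basis `b.ExteriorAlgebra` of the exterior algebra, indexed
by finite sets, that comes from a basis `b` of `V` indexed by `Fin n`. Write `E A` for its element
at `A`, and `k = r + 1`.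

*A star of coordinates.* Order the sets by the injective additive weight `∑ a ∈ A, 2 ^ a`. If `A` and
`B` are the leading sets of `x, y ∈ L` and were disjoint, then `x * y` would have a nonzero coordinate
at `A ∪ B`; so the leading sets of `L` form an intersecting family of `k`-subsets of `Fin n`. There are
at least `dim L = C(n - 1, k - 1)` of them, which is the Erdős–Ko–Rado bound, so by the uniqueness part
of that theorem (`ekr_unique`) they all contain one point `i`. Hence (`exists_center`, `exists_dual`)
the coordinates at the `k`-sets containing `i` identify `L` with the space of all functions on
those sets.

*The dual basis of `L`.* For an `r`-set `A` avoiding `i`, let `z ∈ L` have coordinate `1` at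
`insert i A` and `0` at the other sets through `i`. Multiplying `z` by the dual vectors of suitable
other sets shows that every set in the support of `z` contains `A`. So `z = ι v * E A` for some `v`,
normalised to have `i`-th coordinate `1` (`exists_graph`).

*The vectors `v` agree.* If `A` and `A'` are disjoint, `(ι v * E A) * (ι v' * E A') = 0` forces `v` and
`v'` to have the same coordinate at each `c` outside `A ∪ A'` (`graph_agree`). The Kneser graph on the
`n - 2 ≥ 2 * r + 1` points other than `i` and `c` is connected (`kneser_connected`), so the coordinate
at `c` is the same for all `r`-sets avoiding `i` and `c`; coordinates at points of `A` do not affect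
`ι v * E A`. One vector `v` therefore serves for all `A` (`exists_common`). The products `ι v * E A` span
`L`, and `ι v * ι v = 0`, so `ι v` annihilates `L` (`ι_mul_eq_zero`).

The uniqueness part of Erdős–Ko–Rado is proved by shifting: for shifted families by induction on the
size of the sets, removing the largest point (`ekr_unique_shifted`), and in general because a family
whose shift is a full star is itself a star (`star_of_shift_star`), again by connectedness of the
Kneser graph. -/

/-! ### Connectedness of Kneser graphs and the Erdős–Ko–Rado theorem -/

/-- Connectedness of the Kneser graph on the `r`-subsets of `S` when `2 * r + 1 ≤ S.card`, in the form of
an induction principle: a property passing from each `r`-subset to the disjoint ones passes to all. -/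
theorem kneser_connected {α : Type*} [DecidableEq α] (S : Finset α) (r : ℕ)
    (hS : 2 * r + 1 ≤ S.card) (P : Finset α → Prop)
    (hP : ∀ C D : Finset α, C ⊆ S → D ⊆ S → C.card = r → D.card = r → Disjoint C D → P C → P D)
    (C D : Finset α) (hC : C ⊆ S) (hD : D ⊆ S) (hCr : C.card = r) (hDr : D.card = r)
    (h : P C) : P D := by
  induction hN : (C \ D).card generalizing C with
  | zero =>
    have hsub : C ⊆ D := by
      rwa [Finset.card_eq_zero, Finset.sdiff_eq_empty_iff_subset] at hN
    rwa [← Finset.eq_of_subset_of_card_le hsub (by omega)]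
  | succ N ih =>
    obtain ⟨c, hc⟩ : (C \ D).Nonempty := Finset.card_pos.mp (by omega)
    obtain ⟨d, hd⟩ : (D \ C).Nonempty := by
      rw [← Finset.card_pos, Finset.card_sdiff_comm (by omega : D.card = C.card)]
      omega
    rw [Finset.mem_sdiff] at hc hd
    have hdC : (insert d C).card = r + 1 := by rw [Finset.card_insert_of_notMem hd.2, hCr]
    -- A set disjoint from both `C` and its neighbour `C - c + d` links the two.
    obtain ⟨T, hT, hTr⟩ : ∃ T ⊆ S \ insert d C, T.card = r := by
      apply Finset.exists_subset_card_eq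
      rw [Finset.card_sdiff_of_subset (by clear * - hD hC hd; grind)]
      omega
    have hC' : (insert d (C.erase c)).card = r := by
      rw [Finset.card_insert_of_notMem (by clear * - hd; grind), Finset.card_erase_of_mem hc.1]
      have := Finset.card_pos.mpr ⟨c, hc.1⟩
      omega
    have hT1 : P T := hP C T hC (by clear * - hT; grind) hCr hTr (by
      rw [Finset.disjoint_left]; clear * - hT; grind) h
    have hT2 : P (insert d (C.erase c)) := hP T _ (by clear * - hT; grind)
      (by clear * - hD hC hd; grind) hTr hC' (by
        rw [Finset.disjoint_left]; clear * - hT; grind) hT1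
    refine ih _ (by clear * - hD hC hd; grind) hC' hT2 ?_
    have : insert d (C.erase c) \ D = (C \ D).erase c := by clear * - hd; grind
    rw [this, Finset.card_erase_of_mem (by clear * - hc; grind), hN]
    rfl

/-- The Erdős–Ko–Rado bound for subsets of a finite set `S`, transported from `Fin S.card`. -/
theorem ekr_bound {α : Type*} [DecidableEq α] (S : Finset α) (F : Finset (Finset α)) (r : ℕ)
    (hr : 2 * r ≤ S.card) (hS : ∀ A ∈ F, A ⊆ S) (hF : ∀ A ∈ F, A.card = r)
    (hI : ∀ A ∈ F, ∀ B ∈ F, ¬ Disjoint A B) :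
    F.card ≤ (S.card - 1).choose (r - 1) := by
  classical
  let g : Finset α → Finset (Fin S.card) :=
    fun A => Finset.univ.filter fun i => (S.equivFin.symm i : α) ∈ A
  have hgmem : ∀ A i, i ∈ g A ↔ (S.equivFin.symm i : α) ∈ A := by simp [g]
  have hmap : ∀ A ⊆ S, (g A).map (S.equivFin.symm.toEmbedding.trans
      (Function.Embedding.subtype _)) = A := by
    intro A hA
    ext a
    simp only [Finset.mem_map, hgmem]
    constructor
    · rintro ⟨i, hi, rfl⟩
      exact hi
    · intro ha
      exact ⟨S.equivFin ⟨a, hA ha⟩, by simpa using ha, by simp⟩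
  have hginj : Set.InjOn g F := by
    intro A hA B hB h
    rw [← hmap A (hS A hA), h, hmap B (hS B hB)]
  rw [← Finset.card_image_of_injOn hginj]
  refine Finset.erdos_ko_rado ?_ ?_ (by omega)
  · intro A hA B hB hd
    simp only [Finset.coe_image, Set.mem_image, Finset.mem_coe] at hA hB
    obtain ⟨A, hA, rfl⟩ := hA
    obtain ⟨B, hB, rfl⟩ := hB
    apply hI A hA B hB
    rw [← hmap A (hS A hA), ← hmap B (hS B hB), Finset.disjoint_map]
    exact hd
  · intro A hA
    simp only [Finset.coe_image, Set.mem_image, Finset.mem_coe] at hA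
    obtain ⟨A, hA, rfl⟩ := hA
    rw [← hF A hA]
    conv_rhs => rw [← hmap A (hS A hA)]
    rw [Finset.card_map]

theorem card_star {α : Type*} [DecidableEq α] (S : Finset α) (x : α) (hx : x ∈ S) (r : ℕ) :
    ((S.powersetCard (r + 1)).filter (x ∈ ·)).card = (S.card - 1).choose r := by
  have : (S.powersetCard (r + 1)).filter (x ∈ ·) =
      ((S.erase x).powersetCard r).image (insert x) := by
    ext A
    simp only [Finset.mem_filter, Finset.mem_powersetCard, Finset.mem_image]
    constructor
    · rintro ⟨⟨h1, h2⟩, h3⟩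
      exact ⟨A.erase x, ⟨by clear * - h1; grind, by rw [Finset.card_erase_of_mem h3]; omega⟩,
        Finset.insert_erase h3⟩
    · rintro ⟨B, ⟨h1, h2⟩, rfl⟩
      exact ⟨⟨by clear * - h1 hx; grind, by
        rw [Finset.card_insert_of_notMem (by clear * - h1; grind), h2]⟩,
        Finset.mem_insert_self x B⟩
  rw [this, Finset.card_image_of_injOn, Finset.card_powersetCard, Finset.card_erase_of_mem hx]
  intro A hA B hB h
  have hxA : x ∉ A := fun h' => by simpa using (Finset.mem_powersetCard.mp hA).1 h'
  have hxB : x ∉ B := fun h' => by simpa using (Finset.mem_powersetCard.mp hB).1 h'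
  rw [← Finset.erase_insert hxA, ← Finset.erase_insert hxB]
  exact congrArg (fun C => C.erase x) h

/-- A family of `(r + 1)`-sets of extremal size all of whose members contain `x` is the full star at `x`. -/
theorem star_full {α : Type*} [DecidableEq α] (S : Finset α) (F : Finset (Finset α)) (r : ℕ)
    (hS : ∀ A ∈ F, A ⊆ S) (hF : ∀ A ∈ F, A.card = r + 1)
    (hc : F.card = (S.card - 1).choose r) (x : α) (hx : x ∈ S) (hst : ∀ A ∈ F, x ∈ A)
    (A : Finset α) (hA : A ⊆ S) (hAr : A.card = r + 1) (hxA : x ∈ A) : A ∈ F := by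
  have hsub : F ⊆ (S.powersetCard (r + 1)).filter (x ∈ ·) := by
    intro B hB
    simp [Finset.mem_powersetCard, hS B hB, hF B hB, hst B hB]
  rw [Finset.eq_of_subset_of_card_le hsub (by rw [card_star S x hx, hc])]
  simp [Finset.mem_powersetCard, hA, hAr, hxA]

/-- An extremal intersecting family that is shifted (stable under replacing a point by a smaller one)
contains a full star. Both the members avoiding the largest point `m` and the link of `m` are
intersecting; by the bound and Pascal's rule the link is extremal as well, so the induction hypothesis
applies to it. -/
theorem ekr_unique_shifted {α : Type*} [LinearOrder α] (r : ℕ) (S : Finset α)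
    (F : Finset (Finset α)) (hr : 2 * (r + 1) < S.card) (hS : ∀ A ∈ F, A ⊆ S)
    (hF : ∀ A ∈ F, A.card = r + 1) (hI : ∀ A ∈ F, ∀ B ∈ F, ¬ Disjoint A B)
    (hc : F.card = (S.card - 1).choose r)
    (hsh : ∀ A ∈ F, ∀ i ∈ S, ∀ j ∈ A, i < j → i ∉ A → insert i (A.erase j) ∈ F) :
    ∃ x ∈ S, ∀ A ⊆ S, A.card = r + 1 → x ∈ A → A ∈ F := by
  induction r generalizing S F with
  | zero =>
    rw [Nat.choose_zero_right, Finset.card_eq_one] at hc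
    obtain ⟨A, rfl⟩ := hc
    have hA := hF A (by simp)
    obtain ⟨x, rfl⟩ := Finset.card_eq_one.mp hA
    refine ⟨x, hS {x} (by simp) (by simp), ?_⟩
    intro B _ hB hx
    obtain ⟨y, rfl⟩ := Finset.card_eq_one.mp hB
    simp_all
  | succ r ih =>
    have hne : S.Nonempty := Finset.card_pos.mp (by omega)
    set m := S.max' hne with hm
    have hmS : m ∈ S := S.max'_mem hne
    have hlt : ∀ i ∈ S, i ≠ m → i < m := fun i hi h => lt_of_le_of_ne (S.le_max' i hi) h
    have hcS : (S.erase m).card = S.card - 1 := Finset.card_erase_of_mem hmS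
    set F1 := (F.filter (m ∈ ·)).image (fun A => A.erase m) with hF1
    set F2 := F.filter (m ∉ ·) with hF2
    have hmem1 : ∀ A, A ∈ F1 ↔ m ∉ A ∧ insert m A ∈ F := by
      intro A
      simp only [hF1, Finset.mem_image, Finset.mem_filter]
      constructor
      · rintro ⟨B, ⟨hB, hmB⟩, rfl⟩
        exact ⟨by simp, by rwa [Finset.insert_erase hmB]⟩
      · rintro ⟨h1, h2⟩
        exact ⟨_, ⟨h2, by simp⟩, by rw [Finset.erase_insert h1]⟩
    have hcard1 : F1.card = (F.filter (m ∈ ·)).card := by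
      apply Finset.card_image_of_injOn
      intro A hA B hB h
      simp only [Finset.coe_filter, Set.mem_ofPred_eq] at hA hB
      rw [← Finset.insert_erase hA.2, ← Finset.insert_erase hB.2]
      exact congrArg (insert m) h
    have hsum : F1.card + F2.card = F.card := by
      rw [hcard1]
      exact Finset.card_filter_add_card_filter_not _
    have hS1 : ∀ A ∈ F1, A ⊆ S.erase m := by
      intro A hA
      have h := (hmem1 A).1 hA
      have := hS _ h.2
      clear * - this h
      grind
    have hc1 : ∀ A ∈ F1, A.card = r + 1 := by
      intro A hA
      have h := (hmem1 A).1 hA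
      have := hF _ h.2
      rw [Finset.card_insert_of_notMem h.1] at this
      omega
    -- Shiftedness makes the link of `m` intersecting: if `A` and `B` met only in `m`, some
    -- point outside `A ∪ B` could replace `m` in `A`.
    have hI1 : ∀ A ∈ F1, ∀ B ∈ F1, ¬ Disjoint A B := by
      intro A hA B hB hd
      have hA' := (hmem1 A).1 hA
      have hB' := (hmem1 B).1 hB
      obtain ⟨i, hi⟩ : (S \ insert m (A ∪ B)).Nonempty := by
        rw [← Finset.card_pos]
        have h1 := Finset.le_card_sdiff (insert m (A ∪ B)) S
        have h2 := Finset.card_insert_le m (A ∪ B)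
        have h3 := Finset.card_union_le A B
        have h4 := hc1 A hA
        have h5 := hc1 B hB
        omega
      rw [Finset.mem_sdiff] at hi
      have := hsh _ hA'.2 i hi.1 m (by simp) (hlt i hi.1 (by clear * - hi; grind))
        (by clear * - hi; grind)
      refine hI _ this _ hB'.2 ?_
      rw [Finset.disjoint_left] at hd ⊢
      clear * - hd hi hA' hB'
      grind
    have hb1 : F1.card ≤ (S.card - 2).choose r := by
      have := ekr_bound (S.erase m) F1 (r + 1) (by omega) hS1 hc1 hI1
      rwa [hcS] at this
    have hb2 : F2.card ≤ (S.card - 2).choose (r + 1) := by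
      have := ekr_bound (S.erase m) F2 (r + 2) (by omega)
        (fun A hA => by
          have := hS A (Finset.mem_filter.mp hA).1
          have h' := (Finset.mem_filter.mp hA).2
          clear * - this h'
          grind)
        (fun A hA => hF A (Finset.mem_filter.mp hA).1)
        (fun A hA B hB => hI A (Finset.mem_filter.mp hA).1 B (Finset.mem_filter.mp hB).1)
      rwa [hcS] at this
    have hpascal : (S.card - 1).choose (r + 1) =
        (S.card - 2).choose r + (S.card - 2).choose (r + 1) := by
      obtain ⟨s, hs⟩ : ∃ s, S.card = s + 2 := ⟨S.card - 2, by omega⟩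
      rw [hs]
      exact Nat.choose_succ_succ _ _
    obtain ⟨x, hx, hxF⟩ := ih (S.erase m) F1 (by omega) hS1 hc1 hI1
      (by rw [hcS]; show _ = (S.card - 2).choose r; omega) (by
        intro A hA i hi j hj hij hiA
        have hA' := (hmem1 A).1 hA
        have hjm : j ≠ m := by rintro rfl; exact hA'.1 hj
        rw [hmem1]
        refine ⟨by clear * - hi hA'; grind, ?_⟩
        have := hsh _ hA'.2 i (Finset.mem_of_mem_erase hi) j (Finset.mem_insert_of_mem hj) hij
          (by clear * - hi hiA; grind)
        have h2 : insert m (insert i (A.erase j)) = insert i ((insert m A).erase j) := by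
          clear * - hjm; grind
        rwa [h2])
    refine ⟨x, Finset.mem_of_mem_erase hx, ?_⟩
    -- Sets through `x` and `m` come from the link; the others are shifts of such sets.
    have hmain : ∀ A ⊆ S, A.card = r + 2 → x ∈ A → m ∈ A → A ∈ F := by
      intro A hA hAr hxA hmA
      have := hxF (A.erase m) (by clear * - hA; grind)
        (by rw [Finset.card_erase_of_mem hmA]; omega) (by clear * - hx hxA; grind)
      rw [hmem1, Finset.insert_erase hmA] at this
      exact this.2
    intro A hA hAr hxA
    by_cases hmA : m ∈ A
    · exact hmain A hA hAr hxA hmA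
    · obtain ⟨j, hj⟩ : (A.erase x).Nonempty := by
        rw [← Finset.card_pos, Finset.card_erase_of_mem hxA]; omega
      have hjA : j ∈ A := Finset.mem_of_mem_erase hj
      have hjx : j ≠ x := Finset.ne_of_mem_erase hj
      have hjm : j ≠ m := by rintro rfl; exact hmA hjA
      have := hmain (insert m (A.erase j)) (by clear * - hA hmS; grind) (by
        rw [Finset.card_insert_of_notMem (by clear * - hmA; grind),
          Finset.card_erase_of_mem hjA]; omega)
        (by clear * - hjx hxA; grind) (by simp)
      have := hsh _ this j (hA hjA) m (by simp) (hlt j (hA hjA) hjm) (by clear * - hjm; grind)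
      have h2 : insert j ((insert m (A.erase j)).erase m) = A := by
        clear * - hmA hjA; grind
      rwa [h2] at this

/-- An intersecting family containing a full star is contained in that star. -/
theorem star_of_full {α : Type*} [DecidableEq α] (S : Finset α) (F : Finset (Finset α)) (r : ℕ)
    (hr : 2 * (r + 1) < S.card)
    (hF : ∀ A ∈ F, A.card = r + 1) (hI : ∀ A ∈ F, ∀ B ∈ F, ¬ Disjoint A B) (x : α) (hx : x ∈ S)
    (hfull : ∀ A ⊆ S, A.card = r + 1 → x ∈ A → A ∈ F) : ∀ A ∈ F, x ∈ A := by
  intro A hA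
  by_contra hxA
  obtain ⟨T, hT, hTr⟩ : ∃ T ⊆ S \ insert x A, T.card = r := by
    apply Finset.exists_subset_card_eq
    have h1 := Finset.le_card_sdiff (insert x A) S
    have h2 := Finset.card_insert_le x A
    have h3 := hF A hA
    omega
  refine hI _ (hfull (insert x T) (by clear * - hT hx; grind) ?_ (by simp)) A hA ?_
  · rw [Finset.card_insert_of_notMem (by clear * - hT; grind), hTr]
  · rw [Finset.disjoint_left]; clear * - hT hxA; grind

/-! ### Shifting -/

/-- The image of `A` under the `(i, j)`-shift of the family `F`: the element `j` is replaced
by `i` whenever this is possible and leads outside `F`; otherwise `A` is left alone. -/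
def shiftSet {α : Type*} [DecidableEq α] (i j : α) (F : Finset (Finset α)) (A : Finset α) :
    Finset α :=
  if j ∈ A ∧ i ∉ A ∧ insert i (A.erase j) ∉ F then insert i (A.erase j) else A

/-- The `(i, j)`-shift of the family `F`. -/
def shift {α : Type*} [DecidableEq α] (i j : α) (F : Finset (Finset α)) : Finset (Finset α) :=
  F.image (shiftSet i j F)

/-- The two cases of `shiftSet`: `A` is moved, or it stays because it cannot be moved out of `F`. -/
theorem shiftSet_cases {α : Type*} [DecidableEq α] (i j : α) (F : Finset (Finset α))
    (A : Finset α) :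
    (j ∈ A ∧ i ∉ A ∧ insert i (A.erase j) ∉ F ∧ shiftSet i j F A = insert i (A.erase j)) ∨
    ((j ∈ A → i ∉ A → insert i (A.erase j) ∈ F) ∧ shiftSet i j F A = A) := by
  unfold shiftSet
  split_ifs with h
  · exact Or.inl ⟨h.1, h.2.1, h.2.2, rfl⟩
  · refine Or.inr ⟨?_, rfl⟩
    intro h1 h2
    by_contra h3
    exact h ⟨h1, h2, h3⟩

theorem shiftSet_injOn {α : Type*} [DecidableEq α] (i j : α) (F : Finset (Finset α)) :
    Set.InjOn (shiftSet i j F) F := by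
  intro A hA B hB h
  rcases shiftSet_cases i j F A with ⟨a1, a2, a3, a4⟩ | ⟨-, a4⟩ <;>
  rcases shiftSet_cases i j F B with ⟨b1, b2, b3, b4⟩ | ⟨-, b4⟩ <;> rw [a4, b4] at h
  · clear * - h a1 a2 b1 b2
    ext x
    have := Finset.ext_iff.mp h x
    grind
  · exact absurd (h ▸ hB) a3
  · exact absurd (h ▸ hA) b3
  · exact h

theorem shift_card {α : Type*} [DecidableEq α] (i j : α) (F : Finset (Finset α)) :
    (shift i j F).card = F.card :=
  Finset.card_image_of_injOn (shiftSet_injOn i j F)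

theorem mem_shift {α : Type*} [DecidableEq α] (i j : α) (F : Finset (Finset α)) (B : Finset α) :
    B ∈ shift i j F ↔ ∃ A ∈ F, shiftSet i j F A = B := by
  simp [shift]

theorem shiftSet_card {α : Type*} [DecidableEq α] (i j : α) (F : Finset (Finset α))
    (A : Finset α) : (shiftSet i j F A).card = A.card := by
  rcases shiftSet_cases i j F A with ⟨a1, a2, a3, a4⟩ | ⟨-, a4⟩ <;> rw [a4]
  rw [Finset.card_insert_of_notMem (by clear * - a2; grind), Finset.card_erase_of_mem a1]
  have := Finset.card_pos.mpr ⟨j, a1⟩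
  omega

theorem shift_intersecting {α : Type*} [DecidableEq α] (i j : α) (F : Finset (Finset α))
    (hI : ∀ A ∈ F, ∀ B ∈ F, ¬ Disjoint A B) :
    ∀ A ∈ shift i j F, ∀ B ∈ shift i j F, ¬ Disjoint A B := by
  -- A moved set and an unmoved set: compare the original of the first with the potential
  -- shift of the second, which also lies in `F`.
  have key : ∀ A ∈ F, ∀ B ∈ F, j ∈ A → i ∉ A →
      (j ∈ B → i ∉ B → insert i (B.erase j) ∈ F) → ¬ Disjoint (insert i (A.erase j)) B := by
    intro A hA B hB h1 h2 h3 hd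
    have h4 := hI A hA B hB
    have hiB : i ∉ B := by
      rw [Finset.disjoint_left] at hd
      exact hd (Finset.mem_insert_self _ _)
    by_cases hjB : j ∈ B
    · have h5 := hI A hA _ (h3 hjB hiB)
      apply h5
      rw [Finset.disjoint_left] at hd ⊢
      clear * - hd h2 h1
      grind
    · apply h4
      rw [Finset.disjoint_left] at hd ⊢
      clear * - hd hjB
      grind
  intro A' hA' B' hB'
  rw [mem_shift] at hA' hB'
  obtain ⟨A, hA, rfl⟩ := hA'
  obtain ⟨B, hB, rfl⟩ := hB'
  rcases shiftSet_cases i j F A with ⟨a1, a2, a3, a4⟩ | ⟨a1, a4⟩ <;>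
  rcases shiftSet_cases i j F B with ⟨b1, b2, b3, b4⟩ | ⟨b1, b4⟩ <;> rw [a4, b4]
  · rw [Finset.not_disjoint_iff]
    exact ⟨i, by simp, by simp⟩
  · exact key A hA B hB a1 a2 b1
  · rw [disjoint_comm]
    exact key B hB A hA b1 b2 a1
  · exact hI A hA B hB

/-- If the shift of an intersecting family is a full star, then the family was already a star.
In the critical case, where the centre is `i`, each `r`-set avoiding `i` and `j` is completed to
a member of `F` by `i` or by `j`; intersection forces disjoint `r`-sets to make the same choice,
and the Kneser graph on the remaining points is connected. -/
theorem star_of_shift_star {α : Type*} [DecidableEq α] (i j : α) (hij : i ≠ j) (S : Finset α)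
    (hi : i ∈ S) (hj : j ∈ S) (F : Finset (Finset α)) (r : ℕ)
    (hr : 2 * (r + 1) < S.card) (hS : ∀ A ∈ F, A ⊆ S) (hF : ∀ A ∈ F, A.card = r + 1)
    (hI : ∀ A ∈ F, ∀ B ∈ F, ¬ Disjoint A B) (x : α)
    (hst : ∀ A ∈ shift i j F, x ∈ A)
    (hfull : ∀ A ⊆ S, A.card = r + 1 → x ∈ A → A ∈ shift i j F) :
    ∃ y ∈ S, ∀ A ∈ F, y ∈ A := by
  have hst' : ∀ A ∈ F, x ∈ shiftSet i j F A := fun A hA => hst _ ((mem_shift ..).2 ⟨A, hA, rfl⟩)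
  by_cases hxj : x = j
  · subst hxj
    refine ⟨x, hj, fun A hA => ?_⟩
    have := hst' A hA
    rcases shiftSet_cases i x F A with ⟨a1, a2, a3, a4⟩ | ⟨a1, a4⟩
    · exact a1
    · rwa [a4] at this
  by_cases hxi : x ≠ i
  · have hall : ∀ A ∈ F, x ∈ A := by
      intro A hA
      have := hst' A hA
      rcases shiftSet_cases i j F A with ⟨a1, a2, a3, a4⟩ | ⟨a1, a4⟩ <;> rw [a4] at this
      · clear * - this hxi
        grind
      · exact this
    rcases F.eq_empty_or_nonempty with h | ⟨A, hA⟩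
    · exact ⟨i, hi, by simp [h]⟩
    · exact ⟨x, hS A hA (hall A hA), hall⟩
  push Not at hxi
  subst hxi
  -- The critical case `x = i`; the points of `T` are those other than the two shifted ones.
  set T := (S.erase x).erase j with hT
  have hTc : T.card = S.card - 2 := by
    rw [hT, Finset.card_erase_of_mem (by clear * - hj hij; grind), Finset.card_erase_of_mem hi]
    omega
  have hTx : ∀ C ⊆ T, x ∉ C ∧ j ∉ C ∧ C ⊆ S := by
    intro C hC
    have hCS : C ⊆ S := hC.trans ((Finset.erase_subset _ _).trans (Finset.erase_subset _ _))
    rw [hT] at hC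
    refine ⟨fun h => ?_, fun h => ?_, hCS⟩
    · simpa using hC h
    · simpa using hC h
  have hor : ∀ A ∈ F, x ∈ A ∨ j ∈ A := by
    intro A hA
    have := hst' A hA
    rcases shiftSet_cases x j F A with ⟨a1, a2, a3, a4⟩ | ⟨a1, a4⟩
    · exact Or.inr a1
    · rw [a4] at this
      exact Or.inl this
  have hcover : ∀ C ⊆ T, C.card = r → insert x C ∈ F ∨ insert j C ∈ F := by
    intro C hC hCr
    obtain ⟨h1, h2, h3⟩ := hTx C hC
    have := hfull (insert x C) (Finset.insert_subset hi h3)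
      (by rw [Finset.card_insert_of_notMem h1, hCr]) (by simp)
    obtain ⟨B, hB, hBC⟩ := (mem_shift ..).1 this
    rcases shiftSet_cases x j F B with ⟨a1, a2, a3, a4⟩ | ⟨a1, a4⟩
    · right
      rw [a4] at hBC
      have : insert j C = B := by
        ext y
        have := Finset.ext_iff.mp hBC y
        clear * - this a1 a2 h1 h2
        grind
      rwa [this]
    · left
      rwa [← hBC, a4]
  have hconn := kneser_connected T r (by omega) (fun C => insert x C ∈ F) (by
    intro C D hC hD hCr hDr hd hxC
    obtain ⟨c1, c2, c3⟩ := hTx C hC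
    obtain ⟨d1, d2, d3⟩ := hTx D hD
    rcases hcover D hD hDr with h | h
    · exact h
    · exfalso
      refine hI _ hxC _ h ?_
      rw [Finset.disjoint_left] at hd ⊢
      clear * - hd c1 c2 d1 d2 hij
      grind)
  by_cases hP : ∀ C ⊆ T, C.card = r → insert x C ∈ F
  · refine ⟨x, hi, fun A hA => ?_⟩
    by_contra hxA
    obtain ⟨D, hD, hDr⟩ : ∃ D ⊆ T \ A.erase j, D.card = r := by
      apply Finset.exists_subset_card_eq
      have h1 := Finset.le_card_sdiff (A.erase j) T
      have h2 := Finset.card_erase_of_mem ((hor A hA).resolve_left hxA)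
      have h3 := hF A hA
      omega
    have hDT : D ⊆ T := hD.trans Finset.sdiff_subset
    refine hI _ (hP D hDT hDr) A hA ?_
    have h1 := (hTx D hDT).2.1
    rw [Finset.disjoint_left]
    clear * - hD hxA h1
    grind
  · push Not at hP
    obtain ⟨C₀, hC₀, hC₀r, hC₀F⟩ := hP
    refine ⟨j, hj, fun A hA => ?_⟩
    by_contra hjA
    have hxA := (hor A hA).resolve_right hjA
    refine hC₀F (hconn (A.erase x) C₀ ?_ hC₀ ?_ hC₀r ?_)
    · have := hS A hA
      rw [hT]
      clear * - this hjA
      grind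
    · rw [Finset.card_erase_of_mem hxA, hF A hA]
      rfl
    · rwa [Finset.insert_erase hxA]

/-- Uniqueness in the Erdős–Ko–Rado theorem: for `2 * (r + 1) < n`, an intersecting family of
`(r + 1)`-subsets of an `n`-element set of maximal size is a star. -/
theorem ekr_unique {n : ℕ} (F : Finset (Finset (Fin n))) (r : ℕ)
    (hr : 2 * (r + 1) < n) (hF : ∀ A ∈ F, A.card = r + 1)
    (hI : ∀ A ∈ F, ∀ B ∈ F, ¬ Disjoint A B) (hc : F.card = (n - 1).choose r) :
    ∃ x, ∀ A ∈ F, x ∈ A := by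
  have hn : (Finset.univ : Finset (Fin n)).card = n := by simp
  -- Induction on the sum of all entries of all members, which a proper shift decreases.
  induction hN : ∑ A ∈ F, ∑ a ∈ A, (a : ℕ) using Nat.strong_induction_on generalizing F with
  | _ N ih =>
  by_cases hsh : ∀ A ∈ F, ∀ i, ∀ j ∈ A, i < j → i ∉ A → insert i (A.erase j) ∈ F
  · obtain ⟨x, hx, hfull⟩ := ekr_unique_shifted r Finset.univ F (by omega) (by simp) hF hI
      (by rw [hn, hc]) (fun A hA i _ => hsh A hA i)
    exact ⟨x, star_of_full Finset.univ F r (by omega) hF hI x hx hfull⟩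
  push Not at hsh
  obtain ⟨A, hA, i, j, hjA, hij, hiA, hAF⟩ := hsh
  have hmove : ∀ B : Finset (Fin n), j ∈ B → i ∉ B →
      ∑ a ∈ insert i (B.erase j), (a : ℕ) < ∑ a ∈ B, (a : ℕ) := by
    intro B hjB hiB
    rw [Finset.sum_insert (by clear * - hiB; grind), ← Finset.add_sum_erase B _ hjB]
    have : (i : ℕ) < j := hij
    omega
  have hlt : ∑ B ∈ shift i j F, ∑ a ∈ B, (a : ℕ) < N := by
    rw [← hN, shift, Finset.sum_image (shiftSet_injOn i j F)]
    apply Finset.sum_lt_sum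
    · intro B _
      rcases shiftSet_cases i j F B with ⟨a1, a2, a3, a4⟩ | ⟨a1, a4⟩ <;> rw [a4]
      exact (hmove B a1 a2).le
    · refine ⟨A, hA, ?_⟩
      rcases shiftSet_cases i j F A with ⟨a1, a2, a3, a4⟩ | ⟨a1, a4⟩ <;> rw [a4]
      · exact hmove A a1 a2
      · exact absurd (a1 hjA hiA) hAF
  have hF' : ∀ B ∈ shift i j F, B.card = r + 1 := by
    intro B hB
    obtain ⟨C, hC, rfl⟩ := (mem_shift ..).1 hB
    rw [shiftSet_card, hF C hC]
  have hI' := shift_intersecting i j F hI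
  have hc' : (shift i j F).card = (n - 1).choose r := by rw [shift_card, hc]
  obtain ⟨x, hx⟩ := ih _ hlt (shift i j F) hF' hI' hc' rfl
  obtain ⟨y, -, hy⟩ := star_of_shift_star i j hij.ne Finset.univ (by simp) (by simp) F r
    (by omega) (by simp) hF hI x hx
    (star_full Finset.univ _ r (by simp) hF' (by rw [hn, hc']) x (by simp) hx)
  exact ⟨y, hy⟩

section Coordinates

open Module

/-! ### Products in the basis of the exterior algebra -/

theorem basis_singleton {R V I : Type*} [LinearOrder I] [CommRing R] [AddCommGroup V] [Module R V]
    (b : Basis I R V) (a : I) : b.ExteriorAlgebra {a} = ExteriorAlgebra.ι R (b a) := by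
  rw [ExteriorAlgebra.basis_apply_ofCard b (n := 1) (Finset.card_singleton a)]
  simp [ExteriorAlgebra.ιMulti_family, ExteriorAlgebra.ιMulti_apply]
  congr 1
  have := (Set.powersetCard.mem_range_ofFinEmbEquiv_symm_iff_mem
    (Set.powersetCard.ofCard (Finset.card_singleton a)) _).1 ⟨0, rfl⟩
  exact Finset.mem_singleton.1 this

theorem basis_mul_of_not_disjoint' {R V I : Type*} [LinearOrder I] [CommRing R] [AddCommGroup V]
    [Module R V] (b : Basis I R V) (A B : Finset I) (h : ¬ Disjoint A B) :
    b.ExteriorAlgebra A * b.ExteriorAlgebra B = 0 :=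
  ExteriorAlgebra.basis_mul_of_not_disjoint b (Set.powersetCard.ofCard rfl)
    (Set.powersetCard.ofCard rfl) h

/-- Over a field the sign of `ExteriorAlgebra.basis_mul_of_disjoint` matters only as a nonzero scalar. -/
theorem basis_mul_of_disjoint' {R V I : Type*} [LinearOrder I] [Field R] [AddCommGroup V]
    [Module R V] (b : Basis I R V) (A B : Finset I) (h : Disjoint A B) :
    ∃ u : R, u ≠ 0 ∧
      b.ExteriorAlgebra A * b.ExteriorAlgebra B = u • b.ExteriorAlgebra (A ∪ B) := by
  obtain ⟨s, hs⟩ : ∃ s : Set.powersetCard I A.card, (s : Finset I) = A := ⟨⟨A, rfl⟩, rfl⟩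
  obtain ⟨t, ht⟩ : ∃ t : Set.powersetCard I B.card, (t : Finset I) = B := ⟨⟨B, rfl⟩, rfl⟩
  have hst : Disjoint s.val t.val := by rwa [← hs, ← ht] at h
  have hu : (Set.powersetCard.disjUnion hst : Finset I) = A ∪ B := by
    rw [Set.powersetCard.coe_disjUnion, Finset.disjUnion_eq_union, hs, ht]
  have := ExteriorAlgebra.basis_mul_of_disjoint b s t hst
  rw [hu, hs, ht] at this
  rw [this]
  rcases Int.units_eq_one_or (Equiv.Perm.sign (Set.powersetCard.permOfDisjoint hst))
    with h | h <;> rw [h]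
  · exact ⟨1, by simp, by simp⟩
  · exact ⟨-1, by simp, by simp [Units.smul_def]⟩

theorem card_of_repr_ne_zero {R V I : Type*} [LinearOrder I] [Field R] [AddCommGroup V]
    [Module R V] (b : Basis I R V) (k : ℕ) (x : ExteriorAlgebra R V) (hx : x ∈ ⋀[R]^k V)
    (A : Finset I) (h : b.ExteriorAlgebra.repr x A ≠ 0) : A.card = k := by
  by_contra hA
  apply h
  have hle : (b.ExteriorAlgebra.coord A).comp (⋀[R]^k V).subtype = 0 := by
    refine (b.exteriorPower k).ext fun s => ?_
    rw [LinearMap.comp_apply, Submodule.subtype_apply, ← ExteriorAlgebra.basis_eq_coe_basis,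
      Basis.coord_apply, Basis.repr_self]
    refine Finsupp.single_eq_of_ne ?_
    rintro rfl
    exact hA s.2
  have := LinearMap.congr_fun hle ⟨x, hx⟩
  rwa [LinearMap.comp_apply, Submodule.subtype_apply, Basis.coord_apply] at this

/-- If only one pair of disjoint sets with union `D` contributes to the coordinate of `x * y` at `D`, then
that coordinate is, up to a nonzero scalar, the product of the two coordinates of the factors. All consequences
of `x * y = 0` are extracted through this lemma. -/
theorem coef_mul {R V I : Type*} [LinearOrder I] [Finite I] [Field R] [AddCommGroup V]
    [Module R V] (b : Basis I R V) (x y : ExteriorAlgebra R V) (A B D : Finset I)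
    (hAB : Disjoint A B) (hD : A ∪ B = D)
    (huniq : ∀ A' B' : Finset I, Disjoint A' B' → A' ∪ B' = D → b.ExteriorAlgebra.repr x A' ≠ 0 →
      b.ExteriorAlgebra.repr y B' ≠ 0 → A' = A ∧ B' = B) :
    ∃ s : R, s ≠ 0 ∧ b.ExteriorAlgebra.repr (x * y) D =
      s * (b.ExteriorAlgebra.repr x A * b.ExteriorAlgebra.repr y B) := by
  classical
  have := Fintype.ofFinite I
  obtain ⟨u, hu, huE⟩ := basis_mul_of_disjoint' b A B hAB
  refine ⟨u, hu, ?_⟩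
  have hx := b.ExteriorAlgebra.sum_repr x
  have hy := b.ExteriorAlgebra.sum_repr y
  set X := b.ExteriorAlgebra.repr x with hX
  set Y := b.ExteriorAlgebra.repr y with hY
  have hzero : ∀ A' B', (A', B') ≠ (A, B) → (X A' * Y B') *
      b.ExteriorAlgebra.repr (b.ExteriorAlgebra A' * b.ExteriorAlgebra B') D = 0 := by
    intro A' B' hne
    by_cases hX0 : X A' = 0
    · simp [hX0]
    by_cases hY0 : Y B' = 0
    · simp [hY0]
    by_cases hd : Disjoint A' B'
    · obtain ⟨u', -, hu'⟩ := basis_mul_of_disjoint' b A' B' hd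
      have hne' : A' ∪ B' ≠ D := by
        intro h
        obtain ⟨rfl, rfl⟩ := huniq A' B' hd h hX0 hY0
        exact hne rfl
      rw [hu', map_smul, Basis.repr_self, Finsupp.smul_apply, Finsupp.single_eq_of_ne hne'.symm]
      simp
    · rw [basis_mul_of_not_disjoint' b A' B' hd]
      simp
  have hexp : b.ExteriorAlgebra.repr (x * y) D = ∑ p : Finset I × Finset I, (X p.1 * Y p.2) *
      b.ExteriorAlgebra.repr (b.ExteriorAlgebra p.1 * b.ExteriorAlgebra p.2) D := by
    conv_lhs => rw [← hx, ← hy, Finset.sum_mul_sum]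
    rw [← Finset.sum_product']
    simp only [Finset.univ_product_univ, map_sum, Finsupp.coe_finsetSum, Finset.sum_apply,
      smul_mul_smul_comm, map_smul, Finsupp.smul_apply, smul_eq_mul]
  rw [hexp, Finset.sum_eq_single (A, B) (fun p _ hp => hzero p.1 p.2 hp) (by simp), huE, map_smul,
    Basis.repr_self, hD]
  simp
  ring

/-- A basis element commutes with all `1`-forms up to one common nonzero scalar. -/
theorem basis_mul_ι {R V I : Type*} [LinearOrder I] [Field R] [AddCommGroup V]
    [Module R V] (b : Basis I R V) (A : Finset I) : ∃ u : R, u ≠ 0 ∧ ∀ v,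
      b.ExteriorAlgebra A * ExteriorAlgebra.ι R v =
        u • (ExteriorAlgebra.ι R v * b.ExteriorAlgebra A) := by
  refine ⟨(-1) ^ A.card, by simp, fun v => ?_⟩
  rw [ExteriorAlgebra.basis_apply_ofCard b (n := A.card) rfl, ExteriorAlgebra.ιMulti_family,
    ExteriorAlgebra.ιMulti_apply]
  have : ∀ l : List V, (l.map (ExteriorAlgebra.ι R)).prod * ExteriorAlgebra.ι R v =
      (-1 : R) ^ l.length • (ExteriorAlgebra.ι R v * (l.map (ExteriorAlgebra.ι R)).prod) := by
    intro l
    induction l with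
    | nil => simp
    | cons w l ih =>
      have h := ExteriorAlgebra.ι_add_mul_swap (R := R) v w
      rw [List.map_cons, List.prod_cons, mul_assoc, ih, mul_smul_comm, ← mul_assoc, ← mul_assoc,
        eq_neg_of_add_eq_zero_right h, List.length_cons, pow_succ]
      simp
  have h2 := this (List.ofFn ((b : I → V) ∘
    Set.powersetCard.ofFinEmbEquiv.symm (Set.powersetCard.ofCard (s := A) rfl)))
  rw [List.map_ofFn, List.length_ofFn] at h2
  exact h2

section
variable {R V I : Type*} [LinearOrder I] [Field R] [AddCommGroup V] [Module R V] (b : Basis I R V)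

theorem repr_ι (v : V) (a : I) :
    b.ExteriorAlgebra.repr (ExteriorAlgebra.ι R v) {a} = b.repr v a := by
  have : (b.ExteriorAlgebra.coord {a}).comp (ExteriorAlgebra.ι R) = b.coord a := by
    refine b.ext fun c => ?_
    rw [LinearMap.comp_apply, ← basis_singleton, Basis.coord_apply, Basis.coord_apply,
      Basis.repr_self, Basis.repr_self, Finsupp.single_apply, Finsupp.single_apply]
    simp
  exact LinearMap.congr_fun this v

theorem exists_of_repr_ι_ne_zero (v : V) (C : Finset I)
    (h : b.ExteriorAlgebra.repr (ExteriorAlgebra.ι R v) C ≠ 0) : ∃ a, C = {a} ∧ b.repr v a ≠ 0 := by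
  have : C.card = 1 := by
    refine card_of_repr_ne_zero b 1 _ ?_ C h
    rw [ExteriorAlgebra.exteriorPower, pow_one]
    exact LinearMap.mem_range_self _ v
  obtain ⟨a, rfl⟩ := Finset.card_eq_one.1 this
  rw [repr_ι] at h
  exact ⟨a, rfl, h⟩

theorem eq_of_repr_basis_ne_zero (A C : Finset I)
    (h : b.ExteriorAlgebra.repr (b.ExteriorAlgebra A) C ≠ 0) : C = A := by
  by_contra hne
  apply h
  rw [Basis.repr_self]
  exact Finsupp.single_eq_of_ne hne

theorem repr_ι_mul_basis [Finite I] (A : Finset I) (a : I) (ha : a ∉ A) (v : V) :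
    ∃ s : R, s ≠ 0 ∧ b.ExteriorAlgebra.repr (ExteriorAlgebra.ι R v * b.ExteriorAlgebra A)
      (insert a A) = s * b.repr v a := by
  obtain ⟨s, hs, h⟩ := coef_mul b (ExteriorAlgebra.ι R v) (b.ExteriorAlgebra A) {a} A (insert a A)
    (by simpa using ha) (by simp) (by
      intro A' B' hd hu hA hB
      obtain ⟨c, rfl, -⟩ := exists_of_repr_ι_ne_zero b v A' hA
      obtain rfl := eq_of_repr_basis_ne_zero b A B' hB
      refine ⟨?_, rfl⟩
      have h1 : a ∈ {c} ∪ B' := by rw [hu]; simp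
      clear * - h1 ha
      grind)
  refine ⟨s, hs, ?_⟩
  rw [h, repr_ι, Basis.repr_self, Finsupp.single_eq_same, mul_one]

theorem exists_of_repr_ι_mul_basis_ne_zero (A C : Finset I) (v : V)
    (h : b.ExteriorAlgebra.repr (ExteriorAlgebra.ι R v * b.ExteriorAlgebra A) C ≠ 0) :
    ∃ a ∉ A, C = insert a A := by
  by_contra hne
  push Not at hne
  apply h
  have : (b.ExteriorAlgebra.coord C).comp ((LinearMap.mulRight R (b.ExteriorAlgebra A)).comp
      (ExteriorAlgebra.ι R)) = 0 := by
    refine b.ext fun c => ?_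
    rw [LinearMap.comp_apply, LinearMap.comp_apply, LinearMap.mulRight_apply, ← basis_singleton]
    by_cases hc : c ∈ A
    · rw [basis_mul_of_not_disjoint' b _ _ (by simpa using hc)]
      simp
    · obtain ⟨u, -, hu⟩ := basis_mul_of_disjoint' b {c} A (by simpa using hc)
      rw [hu, map_smul, Basis.coord_apply, Basis.repr_self]
      have := hne c hc
      rw [Finset.insert_eq] at this
      rw [Finsupp.single_eq_of_ne this]
      simp
  exact LinearMap.congr_fun this v

/-- An element supported on the sets `insert a A` with `a ∉ A` has the form `ι v * E A`. -/
theorem exists_eq_ι_mul_basis [Finite I] (A : Finset I) (x : ExteriorAlgebra R V)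
    (h : ∀ C, b.ExteriorAlgebra.repr x C ≠ 0 → ∃ a ∉ A, C = insert a A) :
    ∃ v, x = ExteriorAlgebra.ι R v * b.ExteriorAlgebra A := by
  classical
  have := Fintype.ofFinite I
  suffices hx : x ∈ LinearMap.range ((LinearMap.mulRight R (b.ExteriorAlgebra A)).comp
      (ExteriorAlgebra.ι R)) by
    obtain ⟨v, hv⟩ := hx
    exact ⟨v, hv.symm⟩
  rw [← b.ExteriorAlgebra.sum_repr x]
  refine Submodule.sum_mem _ fun C _ => ?_
  by_cases hC : b.ExteriorAlgebra.repr x C = 0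
  · rw [hC, zero_smul]
    exact Submodule.zero_mem _
  obtain ⟨a, ha, rfl⟩ := h C hC
  obtain ⟨u, hu0, hu⟩ := basis_mul_of_disjoint' b {a} A (by simpa using ha)
  refine Submodule.smul_mem _ _ ⟨u⁻¹ • b a, ?_⟩
  rw [LinearMap.comp_apply, LinearMap.mulRight_apply, map_smul, ← basis_singleton, smul_mul_assoc,
    hu, smul_smul, inv_mul_cancel₀ hu0, one_smul, Finset.insert_eq]

theorem ι_mul_basis_eq_zero [Finite I] (A : Finset I) (v : V) (h : ∀ a ∉ A, b.repr v a = 0) :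
    ExteriorAlgebra.ι R v * b.ExteriorAlgebra A = 0 := by
  apply b.ExteriorAlgebra.repr.injective
  ext C
  rw [map_zero, Finsupp.zero_apply]
  by_contra hC
  obtain ⟨a, ha, rfl⟩ := exists_of_repr_ι_mul_basis_ne_zero b A C v hC
  obtain ⟨s, -, hs⟩ := repr_ι_mul_basis b A a ha v
  rw [hs, h a ha, mul_zero] at hC
  exact hC rfl
end

/-! ### Leading sets and the centre -/

/-- The weight `∑ a ∈ A, 2 ^ a` of a set. It orders the sets totally (by injectivity) and is additive on
disjoint unions, so it plays the role of a monomial order on the basis of the exterior algebra. -/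
def weight {n : ℕ} (A : Finset (Fin n)) : ℕ := ∑ a ∈ A, 2 ^ (a : ℕ)

theorem weight_injective {n : ℕ} : Function.Injective (weight (n := n)) := by
  intro A B h
  have h2 : ∀ A : Finset (Fin n), weight A = ∑ a ∈ A.map Fin.valEmbedding, 2 ^ a := by
    intro A
    rw [Finset.sum_map]
    rfl
  rw [h2, h2] at h
  exact Finset.map_injective _ (Finset.geomSum_injective le_rfl h)

theorem weight_union {n : ℕ} (A B : Finset (Fin n)) (h : Disjoint A B) :
    weight (A ∪ B) = weight A + weight B := Finset.sum_union h

section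
variable {R V : Type*} [Field R] [AddCommGroup V] [Module R V] {n r : ℕ} (b : Basis (Fin n) R V)

theorem exists_lead (x : ExteriorAlgebra R V) (hx : x ≠ 0) :
    ∃ A, b.ExteriorAlgebra.repr x A ≠ 0 ∧
      ∀ B, b.ExteriorAlgebra.repr x B ≠ 0 → weight B ≤ weight A := by
  have hne : (b.ExteriorAlgebra.repr x).support.Nonempty := by
    rw [Finsupp.support_nonempty_iff]
    simpa using hx
  obtain ⟨A, hA, hmax⟩ := Finset.exists_max_image _ weight hne
  exact ⟨A, by simpa using hA, fun B hB => hmax B (by simpa using hB)⟩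

/-- The leading sets of two elements with product zero meet. -/
theorem lead_not_disjoint (x y : ExteriorAlgebra R V) (hxy : x * y = 0) (A B : Finset (Fin n))
    (hA : b.ExteriorAlgebra.repr x A ≠ 0)
    (hAm : ∀ C, b.ExteriorAlgebra.repr x C ≠ 0 → weight C ≤ weight A)
    (hB : b.ExteriorAlgebra.repr y B ≠ 0)
    (hBm : ∀ C, b.ExteriorAlgebra.repr y C ≠ 0 → weight C ≤ weight B) : ¬ Disjoint A B := by
  intro hd
  obtain ⟨s, hs, h⟩ := coef_mul b x y A B (A ∪ B) hd rfl (by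
    intro A' B' hd' hu hA' hB'
    have h1 := hAm A' hA'
    have h2 := hBm B' hB'
    have h3 := congrArg weight hu
    rw [weight_union _ _ hd', weight_union _ _ hd] at h3
    exact ⟨weight_injective (by omega), weight_injective (by omega)⟩)
  rw [hxy, map_zero, Finsupp.zero_apply] at h
  exact mul_ne_zero hs (mul_ne_zero hA hB) h.symm

/-- If the coordinates at the sets in `F` determine the elements of `L`, then `dim L ≤ F.card`. -/
theorem finrank_le_of_coef (L : Submodule R (ExteriorAlgebra R V)) (F : Finset (Finset (Fin n)))
    (h : ∀ x ∈ L, (∀ A ∈ F, b.ExteriorAlgebra.repr x A = 0) → x = 0) :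
    finrank R L ≤ F.card := by
  let T : L →ₗ[R] (F → R) := LinearMap.pi fun A => (b.ExteriorAlgebra.coord A).comp L.subtype
  have hT : Function.Injective T := by
    rw [← LinearMap.ker_eq_bot, LinearMap.ker_eq_bot']
    rintro ⟨x, hx⟩ h0
    ext
    exact h x hx fun A hA => congrFun h0 ⟨A, hA⟩
  simpa using LinearMap.finrank_le_finrank_of_injective hT

/-- There is a point `i` such that the elements of `L` are determined by their coordinates at sets
containing `i`: the centre of the star formed by the leading sets. -/
theorem exists_center (hr : 2 * (r + 1) < n) (L : Submodule R (ExteriorAlgebra R V))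
    (hL : ∀ x ∈ L, ∀ A, b.ExteriorAlgebra.repr x A ≠ 0 → A.card = r + 1)
    (hann : ∀ x ∈ L, ∀ y ∈ L, x * y = 0) (hdim : finrank R L = (n - 1).choose r) :
    ∃ i, ∀ x ∈ L, (∀ A, i ∈ A → b.ExteriorAlgebra.repr x A = 0) → x = 0 := by
  classical
  let F : Finset (Finset (Fin n)) := Finset.univ.filter fun A => ∃ x ∈ L,
    b.ExteriorAlgebra.repr x A ≠ 0 ∧ ∀ B, b.ExteriorAlgebra.repr x B ≠ 0 → weight B ≤ weight A
  have hmem : ∀ A, A ∈ F ↔ ∃ x ∈ L, b.ExteriorAlgebra.repr x A ≠ 0 ∧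
      ∀ B, b.ExteriorAlgebra.repr x B ≠ 0 → weight B ≤ weight A := by simp [F]
  have hFc : ∀ A ∈ F, A.card = r + 1 := by
    intro A hA
    obtain ⟨x, hx, h, -⟩ := (hmem A).1 hA
    exact hL x hx A h
  have hI : ∀ A ∈ F, ∀ B ∈ F, ¬ Disjoint A B := by
    intro A hA B hB
    obtain ⟨x, hx, h1, h2⟩ := (hmem A).1 hA
    obtain ⟨y, hy, h3, h4⟩ := (hmem B).1 hB
    exact lead_not_disjoint b x y (hann x hx y hy) A B h1 h2 h3 h4
  have hle := finrank_le_of_coef b L F (by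
    intro x hx h
    by_contra hx0
    obtain ⟨A, hA, hAm⟩ := exists_lead b x hx0
    exact hA (h A ((hmem A).2 ⟨x, hx, hA, hAm⟩)))
  have hge := ekr_bound Finset.univ F (r + 1) (by simp; omega) (by simp) hFc hI
  rw [Finset.card_univ, Fintype.card_fin, Nat.add_sub_cancel] at hge
  obtain ⟨i, hi⟩ := ekr_unique F r hr hFc hI (by omega)
  refine ⟨i, fun x hx h => ?_⟩
  by_contra hx0
  obtain ⟨A, hA, hAm⟩ := exists_lead b x hx0
  exact hA (h A (hi A ((hmem A).2 ⟨x, hx, hA, hAm⟩)))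

/-- By comparing dimensions, the coordinates at the `(r + 1)`-sets through `i` can be prescribed freely
on `L`; in particular `L` contains the vectors dual to them. -/
theorem exists_dual (L : Submodule R (ExteriorAlgebra R V))
    (hL : ∀ x ∈ L, ∀ A, b.ExteriorAlgebra.repr x A ≠ 0 → A.card = r + 1)
    (hdim : finrank R L = (n - 1).choose r) (i : Fin n)
    (hi : ∀ x ∈ L, (∀ A, i ∈ A → b.ExteriorAlgebra.repr x A = 0) → x = 0)
    (C : Finset (Fin n)) (hC : C.card = r + 1) (hiC : i ∈ C) :
    ∃ z ∈ L, b.ExteriorAlgebra.repr z C = 1 ∧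
      ∀ D, i ∈ D → D ≠ C → b.ExteriorAlgebra.repr z D = 0 := by
  classical
  let F := ((Finset.univ : Finset (Fin n)).powersetCard (r + 1)).filter (i ∈ ·)
  have hF : ∀ A, A ∈ F ↔ A.card = r + 1 ∧ i ∈ A := by simp [F]
  have hFc : F.card = (n - 1).choose r := by simpa [F] using card_star Finset.univ i (by simp) r
  have : FiniteDimensional R (ExteriorAlgebra R V) := b.ExteriorAlgebra.finiteDimensional_of_finite
  let T : L →ₗ[R] (F → R) := LinearMap.pi fun A => (b.ExteriorAlgebra.coord A).comp L.subtype
  have hT : Function.Injective T := by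
    rw [← LinearMap.ker_eq_bot, LinearMap.ker_eq_bot']
    rintro ⟨x, hx⟩ h0
    ext
    refine hi x hx fun A hA => ?_
    by_contra hne
    exact hne (congrFun h0 ⟨A, (hF A).2 ⟨hL x hx A hne, hA⟩⟩)
  have hT' : Function.Surjective T :=
    (LinearMap.injective_iff_surjective_of_finrank_eq_finrank (by simp [hdim, hFc])).1 hT
  obtain ⟨⟨z, hz⟩, hzT⟩ := hT' (Pi.single ⟨C, (hF C).2 ⟨hC, hiC⟩⟩ 1)
  have hco : ∀ D (hD : D ∈ F), b.ExteriorAlgebra.repr z D =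
      (Pi.single ⟨C, (hF C).2 ⟨hC, hiC⟩⟩ 1 : F → R) ⟨D, hD⟩ :=
    fun D hD => congrFun hzT ⟨D, hD⟩
  refine ⟨z, hz, ?_, fun D hiD hne => ?_⟩
  · rw [hco C ((hF C).2 ⟨hC, hiC⟩), Pi.single_eq_same]
  · by_contra h0
    apply h0
    rw [hco D ((hF D).2 ⟨hL z hz D h0, hiD⟩), Pi.single_eq_of_ne]
    simpa using hne
end

/-! ### The dual vectors and their common factor -/

section
variable {R V : Type*} [Field R] [AddCommGroup V] [Module R V] {n r : ℕ} (b : Basis (Fin n) R V)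

/-- The vector of `L` dual to `insert i A` is, up to a scalar, of the form
`ι v * E A`, with `v` of `i`-th coordinate `1`. -/
theorem exists_graph (hr : 2 * (r + 1) < n) (L : Submodule R (ExteriorAlgebra R V))
    (hL : ∀ x ∈ L, ∀ A, b.ExteriorAlgebra.repr x A ≠ 0 → A.card = r + 1)
    (hann : ∀ x ∈ L, ∀ y ∈ L, x * y = 0) (hdim : finrank R L = (n - 1).choose r) (i : Fin n)
    (hi : ∀ x ∈ L, (∀ A, i ∈ A → b.ExteriorAlgebra.repr x A = 0) → x = 0)
    (A : Finset (Fin n)) (hA : A.card = r) (hiA : i ∉ A) :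
    ∃ v, b.repr v i = 1 ∧ ExteriorAlgebra.ι R v * b.ExteriorAlgebra A ∈ L := by
  have hdual : ∀ B : Finset (Fin n), B.card = r → i ∉ B → ∃ z ∈ L,
      b.ExteriorAlgebra.repr z (insert i B) = 1 ∧
      ∀ D, i ∈ D → D ≠ insert i B → b.ExteriorAlgebra.repr z D = 0 := fun B hB hiB =>
    exists_dual b L hL hdim i hi _ (by rw [Finset.card_insert_of_notMem hiB, hB]) (by simp)
  obtain ⟨z, hz, hz1, hz0⟩ := hdual A hA hiA
  -- Suppose `C` is in the support of `z`, avoids `i` and misses some `a ∈ A`. Choose an `r`-set `B`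
  -- avoiding `i`, `a` and `C`. In the product of `z` with the vector dual to `insert i B`, only the
  -- pair `(C, insert i B)` contributes at `C ∪ insert i B`, since this union does not contain `a`.
  have hsub : ∀ C, i ∉ C → b.ExteriorAlgebra.repr z C ≠ 0 → A ⊆ C := by
    intro C hiC hC a ha
    by_contra haC
    have hCr := hL z hz C hC
    obtain ⟨B, hB, hBr⟩ : ∃ B ⊆ Finset.univ \ (insert i (insert a C)), B.card = r := by
      apply Finset.exists_subset_card_eq
      have h1 := Finset.le_card_sdiff (insert i (insert a C)) (Finset.univ : Finset (Fin n))
      have h2 := Finset.card_insert_le i (insert a C)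
      have h3 := Finset.card_insert_le a C
      rw [Finset.card_univ, Fintype.card_fin] at h1
      omega
    have hB' : ∀ x ∈ B, x ≠ i ∧ x ≠ a ∧ x ∉ C := by
      intro x hx
      simpa [not_or] using hB hx
    have hiB : i ∉ B := fun h => (hB' i h).1 rfl
    have haB : a ∉ B := fun h => (hB' a h).2.1 rfl
    have hai : a ≠ i := by rintro rfl; exact hiA ha
    have hd : Disjoint C (insert i B) := by
      rw [Finset.disjoint_left]
      clear * - hB' hiC
      grind
    obtain ⟨y, hy, hy1, hy0⟩ := hdual B hBr hiB
    obtain ⟨s, hs, h⟩ := coef_mul b z y C (insert i B) (C ∪ insert i B) hd rfl (by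
      intro A' B' hd' hu hA' hB'
      have hiu : i ∈ A' ∪ B' := by rw [hu]; simp
      rw [Finset.mem_union] at hiu
      have hiA' : i ∉ A' := by
        intro h
        have hA'' : A' = insert i A := by
          by_contra hne
          exact hA' (hz0 A' h hne)
        have h1 : a ∈ A' ∪ B' := by rw [hA'']; simp [ha]
        rw [hu] at h1
        clear * - h1 haC hai haB
        grind
      have hB'' : B' = insert i B := by
        by_contra hne
        exact hB' (hy0 B' (hiu.resolve_left hiA') hne)
      refine ⟨?_, hB''⟩
      subst hB''
      ext x
      have := Finset.ext_iff.1 hu x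
      rw [Finset.disjoint_left] at hd hd'
      have h1 := @hd x
      have h2 := @hd' x
      simp only [Finset.mem_union] at this
      clear * - this h1 h2
      tauto)
    rw [hann z hz y hy, map_zero, Finsupp.zero_apply, hy1, mul_one] at h
    exact mul_ne_zero hs hC h.symm
  have hform : ∀ C, b.ExteriorAlgebra.repr z C ≠ 0 → ∃ a ∉ A, C = insert a A := by
    intro C hC
    by_cases hiC : i ∈ C
    · refine ⟨i, hiA, ?_⟩
      by_contra hne
      exact hC (hz0 C hiC hne)
    · have h1 := hsub C hiC hC
      have h2 := hL z hz C hC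
      obtain ⟨a, ha⟩ : ∃ a, C \ A = {a} := by
        rw [← Finset.card_eq_one, Finset.card_sdiff_of_subset h1]
        omega
      have h3 : a ∈ C \ A := by rw [ha]; simp
      refine ⟨a, (Finset.mem_sdiff.1 h3).2, ?_⟩
      rw [Finset.insert_eq, ← ha, Finset.sdiff_union_of_subset h1]
  obtain ⟨v, rfl⟩ := exists_eq_ι_mul_basis b A z hform
  obtain ⟨s, hs, h⟩ := repr_ι_mul_basis b A i hiA v
  have hvi : b.repr v i ≠ 0 := by
    intro h0
    rw [hz1, h0, mul_zero] at h
    exact one_ne_zero h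
  refine ⟨(b.repr v i)⁻¹ • v, ?_, ?_⟩
  · rw [map_smul, Finsupp.smul_apply, smul_eq_mul, inv_mul_cancel₀ hvi]
  · rw [map_smul, smul_mul_assoc]
    exact L.smul_mem _ hz

/-- For disjoint `A` and `B`, if `(ι v * E A) * (ι w * E B) = 0`, and `v` and `w` have the
same coordinate `1` at `i`, then they have the same coordinate at every `c` outside `A ∪ B`. -/
theorem graph_agree (A B : Finset (Fin n)) (i c : Fin n) (hci : c ≠ i) (hd : Disjoint A B)
    (hiA : i ∉ A) (hiB : i ∉ B) (hcA : c ∉ A) (hcB : c ∉ B) (v w : V)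
    (hv : b.repr v i = 1) (hw : b.repr w i = 1)
    (h : (ExteriorAlgebra.ι R v * b.ExteriorAlgebra A) *
      (ExteriorAlgebra.ι R w * b.ExteriorAlgebra B) = 0) : b.repr v c = b.repr w c := by
  obtain ⟨u, hu, hAw⟩ := basis_mul_ι b A
  obtain ⟨u', hu', hAB⟩ := basis_mul_of_disjoint' b A B hd
  have h1 : ExteriorAlgebra.ι R v *
      (ExteriorAlgebra.ι R w * b.ExteriorAlgebra (A ∪ B)) = 0 := by
    have h2 : (ExteriorAlgebra.ι R v * b.ExteriorAlgebra A) *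
        (ExteriorAlgebra.ι R w * b.ExteriorAlgebra B) = (u * u') • (ExteriorAlgebra.ι R v *
      (ExteriorAlgebra.ι R w * b.ExteriorAlgebra (A ∪ B))) := by
      rw [mul_assoc, ← mul_assoc (b.ExteriorAlgebra A), hAw, smul_mul_assoc, mul_assoc, hAB,
        mul_smul_comm, mul_smul_comm, mul_smul_comm, smul_smul]
    rw [h] at h2
    exact (smul_eq_zero.1 h2.symm).resolve_left (mul_ne_zero hu hu')
  -- Replacing `v` by `v - w` changes nothing, and kills the `i`-coordinate.
  have h2 : ExteriorAlgebra.ι R (v - w) *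
      (ExteriorAlgebra.ι R w * b.ExteriorAlgebra (A ∪ B)) = 0 := by
    rw [map_sub, sub_mul, h1, ← mul_assoc, ExteriorAlgebra.ι_sq_zero, zero_mul, sub_zero]
  have hiAB : i ∉ A ∪ B := by simp [hiA, hiB]
  have hcAB : c ∉ insert i (A ∪ B) := by simp [hcA, hcB, hci]
  obtain ⟨s', hs', hs2⟩ := repr_ι_mul_basis b (A ∪ B) i hiAB w
  obtain ⟨s, hs, hco⟩ := coef_mul b (ExteriorAlgebra.ι R (v - w))
    (ExteriorAlgebra.ι R w * b.ExteriorAlgebra (A ∪ B)) {c} (insert i (A ∪ B))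
    ({c} ∪ insert i (A ∪ B)) (by simpa using hcAB) rfl (by
      intro A' B' hd' hu hA' hB'
      obtain ⟨a, rfl, ha⟩ := exists_of_repr_ι_ne_zero b _ A' hA'
      obtain ⟨d, hd, rfl⟩ := exists_of_repr_ι_mul_basis_ne_zero b _ B' w hB'
      have hai : a ≠ i := by
        rintro rfl
        rw [map_sub, Finsupp.sub_apply, hv, hw, sub_self] at ha
        exact ha rfl
      have h1 := Finset.ext_iff.1 hu i
      have h2 := Finset.ext_iff.1 hu c
      generalize A ∪ B = E at *
      have hdi : d = i := by
        clear * - h1 hai hiAB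
        grind
      subst hdi
      have hac : a = c := by
        clear * - h2 hcAB
        grind
      rw [hac]
      exact ⟨rfl, rfl⟩)
  rw [h2, map_zero, Finsupp.zero_apply, repr_ι, hs2, hw, mul_one, map_sub, Finsupp.sub_apply] at hco
  by_contra hne
  exact mul_ne_zero hs (mul_ne_zero (sub_ne_zero.2 hne) hs') hco.symm

/-- One vector `v` can be used for all `A`: its coordinate at `c` is the common value, given by
`kneser_connected`, of the coordinates at `c` over all `A` avoiding `i` and `c`. -/
theorem exists_common (hr : 2 * (r + 1) < n) (L : Submodule R (ExteriorAlgebra R V))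
    (hann : ∀ x ∈ L, ∀ y ∈ L, x * y = 0) (i : Fin n)
    (hgraph : ∀ A : Finset (Fin n), A.card = r → i ∉ A →
      ∃ v, b.repr v i = 1 ∧ ExteriorAlgebra.ι R v * b.ExteriorAlgebra A ∈ L) :
    ∃ v, b.repr v i = 1 ∧ ∀ A : Finset (Fin n), A.card = r → i ∉ A →
      ExteriorAlgebra.ι R v * b.ExteriorAlgebra A ∈ L := by
  classical
  choose v hv1 hvL using hgraph
  have hcst : ∀ c, c ≠ i → ∃ t : R, ∀ A (hA : A.card = r) (hiA : i ∉ A), c ∉ A →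
      b.repr (v A hA hiA) c = t := by
    intro c hci
    have hSc : (Finset.univ \ {i, c} : Finset (Fin n)).card = n - 2 := by
      rw [Finset.card_sdiff_of_subset (Finset.subset_univ _), Finset.card_pair hci.symm,
        Finset.card_univ, Fintype.card_fin]
    have hmem : ∀ A ⊆ (Finset.univ \ {i, c} : Finset (Fin n)), i ∉ A ∧ c ∉ A := by
      intro A hA
      exact ⟨fun h => by simpa using hA h, fun h => by simpa using hA h⟩
    obtain ⟨A₀, hA₀, hA₀r⟩ : ∃ A ⊆ (Finset.univ \ {i, c} : Finset (Fin n)), A.card = r :=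
      Finset.exists_subset_card_eq (by omega)
    refine ⟨b.repr (v A₀ hA₀r (hmem A₀ hA₀).1) c, fun A hA hiA hcA => ?_⟩
    refine kneser_connected (Finset.univ \ {i, c}) r (by omega)
      (fun B => ∀ (hB : B.card = r) (hiB : i ∉ B), b.repr (v B hB hiB) c =
        b.repr (v A₀ hA₀r (hmem A₀ hA₀).1) c) ?_ A₀ A hA₀ ?_ hA₀r hA (fun _ _ => rfl) hA hiA
    · intro C D hC hD hCr hDr hCD h hB hiB
      rw [← h hCr (hmem C hC).1]
      exact (graph_agree b C D i c hci hCD (hmem C hC).1 hiB (hmem C hC).2 (hmem D hD).2 _ _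
        (hv1 ..) (hv1 ..) (hann _ (hvL ..) _ (hvL ..))).symm
    · intro a ha
      simp only [Finset.mem_sdiff, Finset.mem_univ, true_and, Finset.mem_insert,
        Finset.mem_singleton, not_or]
      exact ⟨fun h => hiA (h ▸ ha), fun h => hcA (h ▸ ha)⟩
  choose! t ht using hcst
  have hrepr : ∀ c, b.repr (∑ a, (if a = i then 1 else t a) • b a) c = if c = i then 1 else t c :=
    fun c => by rw [b.repr_sum_self]
  refine ⟨∑ a, (if a = i then 1 else t a) • b a, by rw [hrepr, if_pos rfl], fun A hA hiA => ?_⟩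
  -- The difference of the two vectors is supported on `A`.
  have hdiff := ι_mul_basis_eq_zero b A (∑ a, (if a = i then 1 else t a) • b a - v A hA hiA) (by
    intro c hc
    rw [map_sub, Finsupp.sub_apply, hrepr]
    split_ifs with h
    · rw [h, hv1, sub_self]
    · rw [ht c h A hA hiA hc, sub_self])
  rw [map_sub, sub_mul, sub_eq_zero] at hdiff
  rw [hdiff]
  exact hvL A hA hiA

/-- Every `x ∈ L` is a combination of the products `ι v * E A`, because a suitable combination has the same
coordinates at the sets through `i`; hence `ι v * x = 0`. -/
theorem ι_mul_eq_zero (L : Submodule R (ExteriorAlgebra R V))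
    (hL : ∀ x ∈ L, ∀ A, b.ExteriorAlgebra.repr x A ≠ 0 → A.card = r + 1) (i : Fin n)
    (hi : ∀ x ∈ L, (∀ A, i ∈ A → b.ExteriorAlgebra.repr x A = 0) → x = 0) (v : V)
    (hv : b.repr v i = 1) (hvL : ∀ A : Finset (Fin n), A.card = r → i ∉ A →
      ExteriorAlgebra.ι R v * b.ExteriorAlgebra A ∈ L)
    (x : ExteriorAlgebra R V) (hx : x ∈ L) : ExteriorAlgebra.ι R v * x = 0 := by
  classical
  choose! s hs0 hs using fun (A : Finset (Fin n)) (hA : i ∉ A) => repr_ι_mul_basis b A i hA v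
  simp only [hv, mul_one] at hs
  let S : Finset (Finset (Fin n)) := (Finset.univ.powersetCard r).filter (i ∉ ·)
  have hS : ∀ A, A ∈ S ↔ A.card = r ∧ i ∉ A := by simp [S]
  let e : Finset (Fin n) → R := fun A => b.ExteriorAlgebra.repr x (insert i A) * (s A)⁻¹
  have hy : ∑ A ∈ S, e A • (ExteriorAlgebra.ι R v * b.ExteriorAlgebra A) ∈ L :=
    Submodule.sum_mem _ fun A hA => L.smul_mem _ (hvL A ((hS A).1 hA).1 ((hS A).1 hA).2)
  have hxy : x - ∑ A ∈ S, e A • (ExteriorAlgebra.ι R v * b.ExteriorAlgebra A) = 0 := by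
    refine hi _ (L.sub_mem hx hy) fun C hiC => ?_
    by_contra hC
    have hCr := hL _ (L.sub_mem hx hy) C hC
    have hiE : i ∉ C.erase i := by simp
    have hCS : C.erase i ∈ S := (hS _).2 ⟨by rw [Finset.card_erase_of_mem hiC, hCr]; rfl, hiE⟩
    apply hC
    simp only [map_sub, Finsupp.sub_apply, map_sum, Finsupp.coe_finsetSum, Finset.sum_apply,
      map_smul, Finsupp.smul_apply, smul_eq_mul]
    rw [Finset.sum_eq_single (C.erase i)]
    · have h1 := hs _ hiE
      rw [Finset.insert_erase hiC] at h1
      simp only [e]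
      rw [h1, Finset.insert_erase hiC, inv_mul_cancel_right₀ (hs0 _ hiE), sub_self]
    · intro A hA hne
      by_contra h0
      obtain ⟨a, ha, rfl⟩ :=
        exists_of_repr_ι_mul_basis_ne_zero b A C v (right_ne_zero_of_mul h0)
      have hia : i = a := by
        have := ((hS A).1 hA).2
        simpa [this] using hiC
      subst hia
      exact hne (Finset.erase_insert ha).symm
    · exact fun h => absurd hCS h
  rw [sub_eq_zero.1 hxy, Finset.mul_sum]
  refine Finset.sum_eq_zero fun A _ => ?_
  rw [mul_smul_comm, ← mul_assoc, ExteriorAlgebra.ι_sq_zero, zero_mul, smul_zero]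
end

end Coordinates

/-- Corollary to the main theorem: for `k < n/2`, a self-annihilating subspace of `⋀^k V`
of maximal dimension `C(n-1, k-1)` is annihilated by a nonzero `1`-form. -/
theorem maximal_self_annihilating_is_trivial (𝔽 : Type*) [Field 𝔽] (hchar : (2 : 𝔽) ≠ 0)
    (V : Type*) [AddCommGroup V] [Module 𝔽 V] [FiniteDimensional 𝔽 V]
    (n k : ℕ) (hdim : Module.finrank 𝔽 V = n) (hk : 0 < k) (hkn : 2 * k < n)
    (L : Submodule 𝔽 (ExteriorAlgebra 𝔽 V)) (hL : L ≤ ⋀[𝔽]^k V)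
    (hann : ∀ x ∈ L, ∀ y ∈ L, x * y = 0)
    (hmax : Module.finrank 𝔽 L = (n - 1).choose (k - 1)) :
    ∃ v : V, v ≠ 0 ∧ ∀ x ∈ L, ExteriorAlgebra.ι 𝔽 v * x = 0 := by
  obtain ⟨r, rfl⟩ : ∃ r, k = r + 1 := ⟨k - 1, by omega⟩
  rw [Nat.add_sub_cancel] at hmax
  let b : Module.Basis (Fin n) 𝔽 V := Module.finBasisOfFinrankEq 𝔽 V hdim
  have hLc : ∀ x ∈ L, ∀ A, b.ExteriorAlgebra.repr x A ≠ 0 → A.card = r + 1 :=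
    fun x hx => card_of_repr_ne_zero b (r + 1) x (hL hx)
  obtain ⟨i, hi⟩ := exists_center b hkn L hLc hann hmax
  obtain ⟨v, hv, hvL⟩ := exists_common b hkn L hann i
    (exists_graph b hkn L hLc hann hmax i hi)
  refine ⟨v, ?_, ι_mul_eq_zero b L hLc i hi v hv hvL⟩
  rintro rfl
  simp at hv
end

section
/- Let n and k be positive integers with k ≤ n/2, and let 𝓕 and 𝓖 be nonempty families of k-element subsets of {1,…,n} such that F ∩ G ≠ ∅ for every F ∈ 𝓕 and G ∈ 𝓖. Then |𝓕| + |𝓖| ≤ C(n, k) − C(n−k, k) + 1. -/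
/-!
The case `n = 2k` is immediate: complements of members of `𝓕` are `k`-sets outside `𝓖`.

For `2k < n`, among all admissible pairs with `|𝓕| + |𝓖|` maximal choose one with `|𝓕|` minimal; by
symmetry `|𝓕| ≤ |𝓖|`. For a permutation `g` of the ground set, `(𝓕 ∩ g𝓕, 𝓖 ∪ g𝓖)` and
`(𝓕 ∪ g𝓕, 𝓖 ∩ g𝓖)` are again cross-intersecting, and their total sizes add up to twice the maximum.
Hence, as soon as `𝓕 ∩ g𝓕` is nonempty, the first pair is also optimal, and minimality of `|𝓕|`
gives `g𝓕 = 𝓕`: the family `𝓕` is a block for the action of the symmetric group on `k`-sets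
(`HMPair.smul_eq`). This action is primitive when `2k < n`, so if `𝓕` had two members it would be
invariant under every transposition (`swap_mem_stabilizer`), and some member of `𝓕` could be moved off
a given member of `𝓖` (`HMPair.not_forall_swap`). So `𝓕 = {S}`, and `𝓖` consists of `k`-sets
meeting `S`, of which there are `C(n,k) - C(n-k,k)`.
-/

open scoped Pointwise
open Finset Equiv MulAction

/-- A pair of nonempty cross-intersecting families of `k`-subsets of `Fin n`. -/
structure HMPair {n : ℕ} (k : ℕ) (F G : Finset (Finset (Fin n))) : Prop where
  cardF : ∀ A ∈ F, #A = k
  cardG : ∀ A ∈ G, #A = k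
  neF : F.Nonempty
  neG : G.Nonempty
  cross : ∀ A ∈ F, ∀ B ∈ G, (A ∩ B).Nonempty

variable {n k : ℕ} {F G : Finset (Finset (Fin n))}

lemma HMPair.symm (h : HMPair k F G) : HMPair k G F :=
  ⟨h.cardG, h.cardF, h.neG, h.neF, fun A hA B hB => inter_comm B A ▸ h.cross B hB A hA⟩

lemma HMPair.smul (h : HMPair k F G) (g : Perm (Fin n)) : HMPair k (g • F) (g • G) := by
  refine ⟨?_, ?_, h.neF.smul_finset, h.neG.smul_finset, ?_⟩
  · intro A hA
    obtain ⟨B, hB, rfl⟩ := mem_smul_finset.1 hA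
    rw [card_smul_finset, h.cardF B hB]
  · intro A hA
    obtain ⟨B, hB, rfl⟩ := mem_smul_finset.1 hA
    rw [card_smul_finset, h.cardG B hB]
  · intro A hA B hB
    obtain ⟨A', hA', rfl⟩ := mem_smul_finset.1 hA
    obtain ⟨B', hB', rfl⟩ := mem_smul_finset.1 hB
    rw [← smul_finset_inter]
    exact (h.cross A' hA' B' hB').smul_finset

lemma HMPair.inter_union {F' G' : Finset (Finset (Fin n))} (h : HMPair k F G)
    (h' : HMPair k F' G') (hne : (F ∩ F').Nonempty) : HMPair k (F ∩ F') (G ∪ G') := by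
  refine ⟨fun A hA => h.cardF A (mem_inter.1 hA).1, ?_, hne, h.neG.mono subset_union_left, ?_⟩
  · intro A hA
    exact (mem_union.1 hA).elim (h.cardG A) (h'.cardG A)
  · intro A hA B hB
    rw [mem_inter] at hA
    exact (mem_union.1 hB).elim (h.cross A hA.1 B) (h'.cross A hA.2 B)

/-- An optimal pair with `|F|` minimal: translates of `F` that meet `F` are equal to `F`. -/
lemma HMPair.smul_eq (h : HMPair k F G)
    (hmax : ∀ F' G' : Finset (Finset (Fin n)), HMPair k F' G' → #F' + #G' ≤ #F + #G)
    (hmin : ∀ F' G' : Finset (Finset (Fin n)), HMPair k F' G' → #F' + #G' = #F + #G → #F ≤ #F')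
    (g : Perm (Fin n)) (hg : (F ∩ g • F).Nonempty) : g • F = F := by
  have hFG : #F ≤ #G := hmin G F h.symm (add_comm _ _)
  have h1 := h.inter_union (h.smul g) hg
  have b1 := hmax _ _ h1
  have cF := card_union_add_card_inter F (g • F)
  have cG := card_union_add_card_inter G (g • G)
  rw [card_smul_finset] at cF cG
  have hpos := hg.card_pos
  -- If `G` and `g • G` were disjoint, the first pair would already have total size above `2|G|`.
  have hG : (G ∩ g • G).Nonempty := by
    rw [← card_pos]
    omega
  have b2 := hmax _ _ (h.symm.inter_union (h.symm.smul g) hG)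
  have hle := hmin _ _ h1 (by omega)
  have e : F ∩ g • F = F := eq_of_subset_of_card_le inter_subset_left hle
  exact (eq_of_subset_of_card_le (inter_eq_left.1 e) (card_smul_finset g F).le).symm

lemma swap_smul_eq_self {x y : Fin n} {S : Finset (Fin n)} (h : x ∈ S ↔ y ∈ S) :
    swap x y • S = S := by
  ext z
  rw [← inv_smul_mem_iff, swap_inv, Perm.smul_def]
  by_cases hx : z = x
  · subst hx; simp [h]
  by_cases hy : z = y
  · subst hy; simp [h]
  rw [swap_apply_of_ne_of_ne hx hy]

lemma swap_mem_trans {H : Subgroup (Perm (Fin n))} {x y z : Fin n} (h1 : swap x y ∈ H)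
    (h2 : swap y z ∈ H) : swap x z ∈ H := by
  by_cases hxy : x = y
  · subst hxy; exact h2
  by_cases hxz : x = z
  · subst hxz; rw [swap_self]; exact H.one_mem
  have := swap_mul_swap_mul_swap hxy hxz
  rw [swap_comm x z, ← this]
  exact H.mul_mem (H.mul_mem h2 h1) h2

/-- Two distinct members `S`, `T` of a block of `k`-sets, `2k < n`, give two partitions of the ground
set into a set and its complement; transpositions within a part stabilize the block, and the two
partitions together link all points. -/
lemma swap_mem_stabilizer (hkn : 2 * k < n) (hF : ∀ A ∈ F, #A = k)
    (hblock : ∀ g : Perm (Fin n), (F ∩ g • F).Nonempty → g • F = F)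
    {S T : Finset (Fin n)} (hS : S ∈ F) (hT : T ∈ F) (hST : S ≠ T) (x y : Fin n) :
    swap x y ∈ stabilizer (Perm (Fin n)) F := by
  have key : ∀ U ∈ F, ∀ x y, (x ∈ U ↔ y ∈ U) → swap x y ∈ stabilizer (Perm (Fin n)) F := by
    intro U hU x y hxy
    refine mem_stabilizer_iff.2 (hblock _ ⟨U, mem_inter.2 ⟨hU, ?_⟩⟩)
    exact mem_smul_finset.2 ⟨U, hU, swap_smul_eq_self hxy⟩
  -- Some `a ∈ S` and `b ∉ S` lie on the same side of `T`.
  obtain ⟨a, b, ha, hb, hab⟩ : ∃ a b, a ∈ S ∧ b ∉ S ∧ (a ∈ T ↔ b ∈ T) := by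
    have hTS : ¬ T ⊆ S := fun hs => hST (eq_of_subset_of_card_le hs (by rw [hF S hS, hF T hT])).symm
    obtain ⟨b, hbT, hbS⟩ := not_subset.1 hTS
    by_cases hd : ∃ a ∈ S, a ∈ T
    · obtain ⟨a, haS, haT⟩ := hd
      exact ⟨a, b, haS, hbS, by simp [haT, hbT]⟩
    · push Not at hd
      have hlt : #(S ∪ T) < #(univ : Finset (Fin n)) := by
        have := card_union_le S T
        rw [hF S hS, hF T hT] at this
        rw [card_univ, Fintype.card_fin]
        omega
      obtain ⟨c, -, hc⟩ := exists_mem_notMem_of_card_lt_card hlt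
      rw [mem_union, not_or] at hc
      have hSne : S.Nonempty := by
        rw [← card_pos, hF S hS, ← hF T hT, card_pos]
        exact ⟨b, hbT⟩
      obtain ⟨a, haS⟩ := hSne
      exact ⟨a, c, haS, hc.1, by simp [hd a haS, hc.2]⟩
  have hswap := key T hT a b hab
  have toA : ∀ z, swap z a ∈ stabilizer (Perm (Fin n)) F := by
    intro z
    by_cases hz : z ∈ S
    · exact key S hS z a (by simp [hz, ha])
    · exact swap_mem_trans (key S hS z b (by simp [hz, hb])) (swap_comm a b ▸ hswap)
  exact swap_mem_trans (toA x) (swap_comm y a ▸ toA y)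

/-- Transpositions would move a member of `F` off a fixed member of `G`, one point at a time. -/
lemma HMPair.not_forall_swap (hkn : 2 * k ≤ n) (h : HMPair k F G) :
    ¬ ∀ x y : Fin n, swap x y ∈ stabilizer (Perm (Fin n)) F := by
  intro hsw
  obtain ⟨B, hB⟩ := h.neG
  obtain ⟨A, hA, hmin⟩ := exists_min_image F (fun A => #(A ∩ B)) h.neF
  obtain ⟨x, hx⟩ := h.cross A hA B hB
  have hxA := (mem_inter.1 hx).1
  have hxB := (mem_inter.1 hx).2
  have hlt : #(A ∪ B) < #(univ : Finset (Fin n)) := by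
    have h1 := card_union_add_card_inter A B
    have h2 : 0 < #(A ∩ B) := card_pos.2 ⟨x, hx⟩
    rw [h.cardF A hA, h.cardG B hB] at h1
    rw [card_univ, Fintype.card_fin]
    omega
  obtain ⟨y, -, hy⟩ := exists_mem_notMem_of_card_lt_card hlt
  rw [mem_union, not_or] at hy
  have hmem : swap x y • A ∈ F := by
    have := smul_mem_smul_finset (a := swap x y) hA
    rwa [mem_stabilizer_iff.1 (hsw x y)] at this
  have hss : (swap x y • A) ∩ B ⊂ A ∩ B := by
    refine (ssubset_iff_of_subset ?_).2 ⟨x, hx, ?_⟩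
    · intro z hz
      rw [mem_inter, ← inv_smul_mem_iff, swap_inv, Perm.smul_def] at hz
      have hzy : z ≠ y := fun e => hy.2 (e ▸ hz.2)
      by_cases hzx : z = x
      · rw [hzx]; exact hx
      · rw [swap_apply_of_ne_of_ne hzx hzy] at hz
        exact mem_inter.2 hz
    · rw [mem_inter, ← inv_smul_mem_iff, swap_inv, Perm.smul_def, swap_apply_left]
      exact fun hz => hy.1 hz.1
  exact absurd (hmin _ hmem) (not_le.2 (card_lt_card hss))

/-- `k`-sets meeting `S` are counted by removing the `k`-subsets of `Sᶜ` from all `k`-sets. -/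
lemma card_le_of_meets {S : Finset (Fin n)} (hS : #S = k) (hG : ∀ B ∈ G, #B = k)
    (hmeet : ∀ B ∈ G, (S ∩ B).Nonempty) : #G ≤ n.choose k - (n - k).choose k := by
  have hsub : G ⊆ powersetCard k univ \ powersetCard k Sᶜ := by
    intro B hB
    rw [mem_sdiff, mem_powersetCard, mem_powersetCard]
    refine ⟨⟨subset_univ _, hG B hB⟩, fun hc => ?_⟩
    obtain ⟨x, hx⟩ := hmeet B hB
    rw [mem_inter] at hx
    exact mem_compl.1 (hc.1 hx.2) hx.1
  have := card_le_card hsub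
  rwa [card_sdiff_of_subset (powersetCard_mono (subset_univ _)), card_powersetCard,
    card_powersetCard, card_compl, card_univ, Fintype.card_fin, hS] at this

lemma HMPair.card_le_of_eq (hkn : 2 * k = n) (h : HMPair k F G) :
    #F + #G ≤ n.choose k := by
  have hdisj : Disjoint (F.image compl) G := by
    rw [disjoint_left]
    intro B hB hBG
    obtain ⟨A, hA, rfl⟩ := mem_image.1 hB
    have := h.cross A hA _ hBG
    simp at this
  have hsub : F.image compl ∪ G ⊆ powersetCard k univ := by
    refine union_subset ?_ fun B hB => mem_powersetCard.2 ⟨subset_univ _, h.cardG B hB⟩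
    intro B hB
    obtain ⟨A, hA, rfl⟩ := mem_image.1 hB
    refine mem_powersetCard.2 ⟨subset_univ _, ?_⟩
    rw [card_compl, Fintype.card_fin, h.cardF A hA]
    omega
  have := card_le_card hsub
  rwa [card_union_of_disjoint hdisj, card_image_of_injective _ compl_injective,
    card_powersetCard, card_univ, Fintype.card_fin] at this

/-- Hilton–Milner cross-intersecting bound for set systems: if `𝓕` and `𝓖` are nonempty
cross-intersecting families of `k`-element subsets of `{1,…,n}` with `k ≤ n/2`, then
`|𝓕| + |𝓖| ≤ C(n,k) - C(n-k,k) + 1`. -/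
theorem hilton_milner_cross_intersecting (n k : ℕ) (hn : 0 < n) (hk : 0 < k)
    (hkn : 2 * k ≤ n)
    (𝓕 𝓖 : Finset (Finset (Fin n)))
    (h𝓕card : ∀ F ∈ 𝓕, F.card = k) (h𝓖card : ∀ G ∈ 𝓖, G.card = k)
    (h𝓕ne : 𝓕.Nonempty) (h𝓖ne : 𝓖.Nonempty)
    (hcross : ∀ F ∈ 𝓕, ∀ G ∈ 𝓖, (F ∩ G).Nonempty) :
    𝓕.card + 𝓖.card ≤ n.choose k - (n - k).choose k + 1 := by
  classical
  have h0 : HMPair k 𝓕 𝓖 := ⟨h𝓕card, h𝓖card, h𝓕ne, h𝓖ne, hcross⟩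
  rcases hkn.eq_or_lt with heq | hlt
  · have hnk : n - k = k := by omega
    have := h0.card_le_of_eq heq
    rw [hnk, Nat.choose_self]
    omega
  let s := {p : Finset (Finset (Fin n)) × Finset (Finset (Fin n)) | HMPair k p.1 p.2}
  obtain ⟨p, hp, hpmax⟩ := Set.exists_max_image s (fun p => #p.1 + #p.2) s.toFinite ⟨(𝓕, 𝓖), h0⟩
  let t := {q | q ∈ s ∧ #q.1 + #q.2 = #p.1 + #p.2}
  obtain ⟨⟨F, G⟩, ⟨hq, hsum⟩, hqmin⟩ :=
    Set.exists_min_image t (fun q => #q.1) t.toFinite ⟨p, hp, rfl⟩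
  change HMPair k F G at hq
  change #F + #G = _ at hsum
  have hmax : ∀ F' G' : Finset (Finset (Fin n)), HMPair k F' G' → #F' + #G' ≤ #F + #G :=
    fun F' G' h => hsum ▸ hpmax (F', G') h
  have hblock := hq.smul_eq hmax fun F' G' h e => hqmin (F', G') ⟨h, e.trans hsum⟩
  have hone : #F ≤ 1 := by
    by_contra hgt
    obtain ⟨S, hS, T, hT, hST⟩ := one_lt_card.1 (not_le.1 hgt)
    exact hq.not_forall_swap hkn (swap_mem_stabilizer hlt hq.cardF hblock hS hT hST)
  obtain ⟨S, hS⟩ := hq.neF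
  have hG := card_le_of_meets (hq.cardF S hS) hq.cardG (hq.cross S hS)
  have := hmax 𝓕 𝓖 h0
  omega
end

section
/- Let 𝔽 be a field of characteristic different from 2, let V be an n-dimensional 𝔽-vector space, let k be a positive integer with k ≤ n/2, and let f, g ∈ V be linearly independent. Suppose L is a subspace of ⋀^k V such that: x ∧ y = 0 for all x, y ∈ L; there is no nonzero 1-form v ∈ V with v ∧ x = 0 for all x ∈ L; f ∧ g ∧ x = 0 for all x ∈ L; and some element m ∈ L satisfies f ∧ m = 0 but g ∧ m ≠ 0. Then dim L ≤ C(n−1, k−1) − C(n−k−1, k−1) + 1. -/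
/-!
The bound is deduced from its set-theoretic counterpart by passing to initial monomials.

Extend `f`, `g` to a basis of `V` in which `f` has the largest index and `g` the second largest, and
let `F` be the family of `k`-sets indexing the colex-smallest monomials of the nonzero elements of
`L`. Then `dim L ≤ |F|` (`finrank_le_card_initial`). The colex order is compatible with products of
disjoint monomials (`colex_union_unique`), so self-annihilation makes `F` intersecting
(`IsInitial.not_disjoint`). Since `f ∧ g` annihilates `L`, every member of `F` contains the index of
`f` or of `g`. Because these indices are the top two, the element `m` yields a member with `f` but
not `g`, and some `x ∈ L` with `f ∧ x ≠ 0` yields a member without `f`.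

There are at most `C(n-2, k-2)` members of `F` containing both indices. The remaining ones, with
`f` and `g` deleted, form two nonempty cross-intersecting families of `(k-1)`-sets on `n-2` points,
and `hilton_milner_cross` bounds their total size by `C(n-2, k-1) - C(n-k-1, k-1) + 1`. That
cross-intersecting theorem holds because the symmetric group acts primitively on `j`-subsets of a
set whose size is not `2j`: uncrossing an extremal pair with its translates shows that one of its
families is a block, hence a single set (`cross_independent_card_le`).
-/

/-! ### Cross-intersecting families -/

open scoped Pointwise in
/-- Let a primitive group preserve a symmetric relation `R` on a finite set `X` in which every point
has at least `d > 0` neighbours. Nonempty `A`, `C` with no `R`-edge between them satisfy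
`|A| + |C| + d ≤ |X| + 1`, with equality for a point of degree `d` and its non-neighbours. A pair of
largest total size whose first member is smallest possible is uncrossed with its translates, which
shows that this first member is a block, hence a single point. -/
theorem cross_independent_card_le {G X : Type*} [Group G] [MulAction G X] [Fintype X]
    [DecidableEq X] [MulAction.IsPreprimitive G X] (R : X → X → Prop) [DecidableRel R]
    (hsymm : ∀ x y, R x y → R y x) (hinv : ∀ (a : G) x y, R (a • x) (a • y) → R x y)
    (d : ℕ) (hd : 0 < d) (hdeg : ∀ x, d ≤ (Finset.univ.filter (R x)).card)
    (A C : Finset X) (hA : A.Nonempty) (hC : C.Nonempty) (hAC : ∀ a ∈ A, ∀ c ∈ C, ¬ R a c) :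
    A.card + C.card + d ≤ Fintype.card X + 1 := by
  classical
  -- `P` is the set of admissible pairs; `(B, D)` has largest total size and then smallest `|B|`.
  let P : Finset (Finset X × Finset X) := Finset.univ.filter fun p =>
    p.1.Nonempty ∧ p.2.Nonempty ∧ ∀ a ∈ p.1, ∀ c ∈ p.2, ¬ R a c
  have hP (p : Finset X × Finset X) : p ∈ P ↔
    p.1.Nonempty ∧ p.2.Nonempty ∧ ∀ a ∈ p.1, ∀ c ∈ p.2, ¬ R a c := by simp [P]
  obtain ⟨p₀, hp₀, hmax₀⟩ := P.exists_max_image (fun p => p.1.card + p.2.card)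
    ⟨(A, C), (hP _).2 ⟨hA, hC, hAC⟩⟩
  obtain ⟨⟨B, D⟩, hp, hmin⟩ := (P.filter fun p =>
      p.1.card + p.2.card = p₀.1.card + p₀.2.card).exists_min_image (fun p => p.1.card)
    ⟨p₀, Finset.mem_filter.2 ⟨hp₀, rfl⟩⟩
  rw [Finset.mem_filter] at hp
  obtain ⟨hpP, hpsum⟩ := hp
  have hmax : ∀ p ∈ P, p.1.card + p.2.card ≤ B.card + D.card := fun p h => by
    have := hmax₀ p h
    simp only at this hpsum
    omega
  obtain ⟨hB, hD, hBD⟩ := (hP _).1 hpP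
  simp only at hB hD hBD hpsum
  have hswap : (D, B) ∈ P := (hP _).2 ⟨hD, hB, fun a ha c hc h => hBD c hc a ha (hsymm _ _ h)⟩
  have hle : B.card ≤ D.card := hmin (D, B) (by
    rw [Finset.mem_filter]; exact ⟨hswap, by simp only; omega⟩)
  -- If `a • B` meets `B`, then `(a • B ∩ B, a • D ∪ D)` and `(a • B ∪ B, a • D ∩ D)` are admissible
  -- and their sizes add up to twice that of `(B, D)`. So the first is optimal too, whence
  -- `a • B ∩ B = B`.
  have hblock : MulAction.IsBlock G (B : Set X) := by
    rw [MulAction.isBlock_iff_smul_eq_of_nonempty]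
    intro a hne
    rw [← Finset.coe_smul_finset, ← Finset.coe_inter, Finset.coe_nonempty] at hne
    rw [← Finset.coe_smul_finset, Finset.coe_inj]
    have hBD' : ∀ x ∈ a • B, ∀ y ∈ a • D, ¬ R x y := by
      intro x hx y hy h
      obtain ⟨x, hx', rfl⟩ := Finset.mem_smul_finset.1 hx
      obtain ⟨y, hy', rfl⟩ := Finset.mem_smul_finset.1 hy
      exact hBD x hx' y hy' (hinv _ _ _ h)
    have hint : (a • B ∩ B, a • D ∪ D) ∈ P := by
      refine (hP _).2 ⟨hne, hD.mono Finset.subset_union_right, fun x hx y hy => ?_⟩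
      rw [Finset.mem_inter] at hx
      rcases Finset.mem_union.1 hy with hy | hy
      · exact hBD' x hx.1 y hy
      · exact hBD x hx.2 y hy
    have h1 := hmax _ hint
    simp only at h1
    have cB := Finset.card_union_add_card_inter (a • B) B
    have cD := Finset.card_union_add_card_inter (a • D) D
    rw [Finset.card_smul_finset] at cB cD
    have hpos := hne.card_pos
    -- Otherwise `|a • D ∪ D| = 2|D| ≥ |B| + |D|`, and `hint` would beat the maximum.
    have hDne : (a • D ∩ D).Nonempty := by
      rw [← Finset.card_pos]; omega
    have huni : (a • B ∪ B, a • D ∩ D) ∈ P := by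
      refine (hP _).2 ⟨hB.mono Finset.subset_union_right, hDne, fun x hx y hy => ?_⟩
      rw [Finset.mem_inter] at hy
      rcases Finset.mem_union.1 hx with hx | hx
      · exact hBD' x hx y hy.1
      · exact hBD x hx y hy.2
    have h2 := hmax _ huni
    simp only at h2
    have h3 := hmin _ (Finset.mem_filter.2 ⟨hint, by simp only; omega⟩)
    simp only at h3
    have e1 : a • B ∩ B = B := Finset.eq_of_subset_of_card_le Finset.inter_subset_right h3
    exact (Finset.eq_of_subset_of_card_le (Finset.inter_eq_right.1 e1)
      (by rw [Finset.card_smul_finset])).symm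
  have hAle := hmax _ ((hP (A, C)).2 ⟨hA, hC, hAC⟩)
  simp only at hAle
  rcases hblock.subsingleton_or_eq_univ with h | h
  · have hB1 : B.card ≤ 1 := Finset.card_le_one.2 fun x hx y hy => h hx hy
    obtain ⟨x, hx⟩ := hB
    have hdis : Disjoint D (Finset.univ.filter (R x)) := by
      rw [Finset.disjoint_left]
      intro y hy hy'
      exact hBD x hx y hy (Finset.mem_filter.1 hy').2
    have := Finset.card_le_univ (D ∪ Finset.univ.filter (R x))
    rw [Finset.card_union_of_disjoint hdis] at this
    have := hdeg x
    omega
  · obtain ⟨y, hy⟩ := hD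
    obtain ⟨x, hx⟩ := Finset.card_pos.1 (hd.trans_le (hdeg y))
    have hxB : x ∈ (B : Set X) := h ▸ Set.mem_univ x
    exact absurd (hsymm _ _ (Finset.mem_filter.1 hx).2) (hBD x hxB y hy)

open scoped Pointwise in
/-- The Hilton-Milner bound for nonempty cross-intersecting families of `j`-sets, with the
subtracted binomial coefficient moved to the left. -/
theorem hilton_milner_cross {α : Type*} [Fintype α] [DecidableEq α] (j : ℕ)
    (hj : 2 * j ≤ Fintype.card α) (A C : Finset (Finset α))
    (hA : A.Nonempty) (hC : C.Nonempty) (hAj : ∀ S ∈ A, S.card = j) (hCj : ∀ S ∈ C, S.card = j)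
    (hAC : ∀ S ∈ A, ∀ T ∈ C, ¬ Disjoint S T) :
    A.card + C.card + (Fintype.card α - j).choose j ≤ (Fintype.card α).choose j + 1 := by
  classical
  have hjpos : 0 < j := by
    rcases Nat.eq_zero_or_pos j with rfl | h
    · obtain ⟨S, hS⟩ := hA
      obtain ⟨T, hT⟩ := hC
      have := hAj S hS
      rw [Finset.card_eq_zero] at this
      exact absurd (by simp [this]) (hAC S hS T hT)
    · exact h
  rcases hj.eq_or_lt with h2 | h2
  -- When `2j` is the size of the ground set the symmetric group is imprimitive on `j`-sets
  -- (complementary pairs are blocks), but `A` contains no complement of a member of `C`.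
  · have hCc : (C.image compl).card = C.card :=
      Finset.card_image_of_injective _ compl_injective
    have hdis : Disjoint A (C.image compl) := by
      rw [Finset.disjoint_left]
      rintro S hS hS'
      obtain ⟨T, hT, rfl⟩ := Finset.mem_image.1 hS'
      exact hAC _ hS T hT disjoint_compl_left
    have hsub : A ∪ C.image compl ⊆ Finset.univ.powersetCard j := by
      intro S hS
      rw [Finset.mem_powersetCard]
      refine ⟨Finset.subset_univ _, ?_⟩
      rcases Finset.mem_union.1 hS with hS | hS
      · exact hAj S hS
      · obtain ⟨T, hT, rfl⟩ := Finset.mem_image.1 hS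
        rw [Finset.card_compl, hCj T hT]; omega
    have := Finset.card_le_card hsub
    rw [Finset.card_union_of_disjoint hdis, hCc, Finset.card_powersetCard, Finset.card_univ] at this
    have e : Fintype.card α - j = j := by omega
    rw [e, Nat.choose_self]
    omega
  · have := Set.powersetCard.isPreprimitive_perm (α := α) (n := j) hjpos
      (by rw [Nat.card_eq_fintype_card]; omega) (by rw [Nat.card_eq_fintype_card]; omega)
    have hcard (F : Finset (Finset α)) (hF : ∀ S ∈ F, S.card = j) :
        (Finset.univ.filter fun x : Set.powersetCard α j => (x : Finset α) ∈ F).card = F.card := by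
      rw [← Finset.card_map ⟨Subtype.val, Subtype.val_injective⟩]
      congr 1
      ext S
      simp only [Finset.mem_map, Finset.mem_filter, Finset.mem_univ, true_and,
        Function.Embedding.coeFn_mk]
      exact ⟨by rintro ⟨x, hx, rfl⟩; exact hx, fun h => ⟨⟨S, hF S h⟩, h, rfl⟩⟩
    have hne (F : Finset (Finset α)) (hF : ∀ S ∈ F, S.card = j) (h : F.Nonempty) :
        (Finset.univ.filter fun x : Set.powersetCard α j => (x : Finset α) ∈ F).Nonempty := by
      rw [← Finset.card_pos, hcard F hF]; exact h.card_pos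
    have key := cross_independent_card_le (G := Equiv.Perm α) (X := Set.powersetCard α j)
      (fun x y => Disjoint (x : Finset α) (y : Finset α)) (fun x y h => h.symm)
      (fun a x y h => by
        rw [Set.powersetCard.coe_smul, Set.powersetCard.coe_smul, ← Finset.disjoint_coe,
          Finset.coe_smul_finset, Finset.coe_smul_finset, Set.disjoint_smul_set,
          Finset.disjoint_coe] at h
        exact h)
      ((Fintype.card α - j).choose j) (Nat.choose_pos (by omega))
      (fun x => by
        rw [← Finset.card_map ⟨Subtype.val, Subtype.val_injective⟩]
        have hx : (x : Finset α)ᶜ.card = Fintype.card α - j := by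
          rw [Finset.card_compl, Set.powersetCard.card_eq]
        rw [← hx, ← Finset.card_powersetCard]
        refine Finset.card_le_card fun S hS => ?_
        rw [Finset.mem_powersetCard] at hS
        rw [Finset.mem_map]
        refine ⟨⟨S, hS.2⟩, ?_, rfl⟩
        rw [Finset.mem_filter]
        exact ⟨Finset.mem_univ _, (Finset.subset_compl_iff_disjoint_left.1 hS.1)⟩)
      _ _ (hne A hAj hA) (hne C hCj hC)
      (fun a ha c hc => hAC _ (Finset.mem_filter.1 ha).2 _ (Finset.mem_filter.1 hc).2)
    rw [hcard A hAj, hcard C hCj, ← Nat.card_eq_fintype_card (α := Set.powersetCard α j),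
      Set.powersetCard.card, Nat.card_eq_fintype_card] at key
    exact key

/-! ### Intersecting families covered by two points -/

/-- The combinatorial form of the theorem. Members containing both `f` and `g` are bounded
trivially; the others, with `f` and `g` deleted, form two cross-intersecting families on the
remaining points. -/
theorem card_intersecting_two_cover_le {I : Type*} [Fintype I] [DecidableEq I] (k : ℕ)
    (hk : 0 < k) (hkI : 2 * k ≤ Fintype.card I) (f g : I) (hfg : f ≠ g) (F : Finset (Finset I))
    (hcard : ∀ S ∈ F, S.card = k) (hint : ∀ S ∈ F, ∀ T ∈ F, ¬ Disjoint S T)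
    (hcover : ∀ S ∈ F, f ∈ S ∨ g ∈ S) (hF : ∃ S ∈ F, f ∈ S ∧ g ∉ S) (hG : ∃ S ∈ F, f ∉ S) :
    F.card ≤
      (Fintype.card I - 1).choose (k - 1) - (Fintype.card I - k - 1).choose (k - 1) + 1 := by
  classical
  let p : I → Prop := fun i => i ≠ f ∧ i ≠ g
  have hmemp (i : I) : p i ↔ i ≠ f ∧ i ≠ g := Iff.rfl
  -- `π` deletes `f` and `g`.
  let π : Finset I → Finset (Subtype p) := fun S => S.subtype p
  have hπ (S T : Finset I) (h : π S = π T) (hf : f ∈ S ↔ f ∈ T) (hg : g ∈ S ↔ g ∈ T) : S = T := by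
    ext i
    by_cases hif : i = f
    · rw [hif, hf]
    by_cases hig : i = g
    · rw [hig, hg]
    have := Finset.ext_iff.1 h ⟨i, hif, hig⟩
    simpa [π] using this
  have hπcard (S : Finset I) : (π S).card = ((S.erase f).erase g).card := by
    rw [Finset.card_subtype]
    congr 1
    ext i
    simp only [Finset.mem_filter, Finset.mem_erase, hmemp]
    tauto
  have hπdis (S T : Finset I) (h : Disjoint (π S) (π T)) (hf : f ∈ S → f ∉ T)
      (hg : g ∈ S → g ∉ T) : Disjoint S T := by
    rw [Finset.disjoint_left] at h ⊢
    intro i hi hi'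
    by_cases hif : i = f
    · subst hif; exact hf hi hi'
    by_cases hig : i = g
    · subst hig; exact hg hi hi'
    exact h (a := ⟨i, hif, hig⟩) (by simpa [π] using hi) (by simpa [π] using hi')
  have hN : Fintype.card (Subtype p) = Fintype.card I - 2 := by
    rw [Fintype.card_subtype]
    have : (Finset.univ.filter p) = (Finset.univ.erase f).erase g := by
      ext i
      simp only [Finset.mem_filter, Finset.mem_erase, Finset.mem_univ, hmemp]
      tauto
    rw [this, Finset.card_erase_of_mem (by simp [hfg.symm]), Finset.card_erase_of_mem (by simp),
      Finset.card_univ]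
    omega
  -- `F` splits according to the trace of its members on `{f, g}`.
  let A := F.filter fun S => f ∈ S ∧ g ∉ S
  let C := F.filter fun S => f ∉ S
  let E := F.filter fun S => f ∈ S ∧ g ∈ S
  have hsplit : F.card ≤ A.card + C.card + E.card := by
    have : F ⊆ (A ∪ C) ∪ E := by
      intro S hS
      simp only [A, C, E, Finset.mem_union, Finset.mem_filter]
      tauto
    exact (Finset.card_le_card this).trans
      ((Finset.card_union_le _ _).trans (Nat.add_le_add_right (Finset.card_union_le _ _) _))
  have hAmem (S) (h : S ∈ A) : S ∈ F ∧ f ∈ S ∧ g ∉ S := Finset.mem_filter.1 h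
  have hCmem (S) (h : S ∈ C) : S ∈ F ∧ f ∉ S ∧ g ∈ S := by
    obtain ⟨h1, h2⟩ := Finset.mem_filter.1 h
    exact ⟨h1, h2, (hcover S h1).resolve_left h2⟩
  have hEmem (S) (h : S ∈ E) : S ∈ F ∧ f ∈ S ∧ g ∈ S := Finset.mem_filter.1 h
  have hAim : (A.image π).card = A.card := Finset.card_image_of_injOn fun S hS T hT h => by
    have h1 := hAmem S hS
    have h2 := hAmem T hT
    exact hπ S T h (by tauto) (by tauto)
  have hCim : (C.image π).card = C.card := Finset.card_image_of_injOn fun S hS T hT h => by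
    have h1 := hCmem S hS
    have h2 := hCmem T hT
    exact hπ S T h (by tauto) (by tauto)
  have hEim : (E.image π).card = E.card := Finset.card_image_of_injOn fun S hS T hT h => by
    have h1 := hEmem S hS
    have h2 := hEmem T hT
    exact hπ S T h (by tauto) (by tauto)
  have hcross := hilton_milner_cross (k - 1) (by omega) (A.image π) (C.image π)
    (by
      obtain ⟨S, hS, h⟩ := hF
      exact Finset.Nonempty.image ⟨S, Finset.mem_filter.2 ⟨hS, h⟩⟩ _)
    (by
      obtain ⟨S, hS, h⟩ := hG
      exact Finset.Nonempty.image ⟨S, Finset.mem_filter.2 ⟨hS, h⟩⟩ _)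
    (by
      intro U hU
      obtain ⟨S, hS, rfl⟩ := Finset.mem_image.1 hU
      obtain ⟨h1, h2, h3⟩ := hAmem S hS
      rw [hπcard, Finset.erase_eq_of_notMem (by simp [h3]), Finset.card_erase_of_mem h2,
        hcard S h1])
    (by
      intro U hU
      obtain ⟨S, hS, rfl⟩ := Finset.mem_image.1 hU
      obtain ⟨h1, h2, h3⟩ := hCmem S hS
      rw [hπcard, Finset.erase_eq_of_notMem h2, Finset.card_erase_of_mem h3, hcard S h1])
    (by
      intro U hU U' hU' hdis
      obtain ⟨S, hS, rfl⟩ := Finset.mem_image.1 hU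
      obtain ⟨T, hT, rfl⟩ := Finset.mem_image.1 hU'
      have h1 := hAmem S hS
      have h2 := hCmem T hT
      exact hint S h1.1 T h2.1 (hπdis S T hdis (by tauto) (by tauto)))
  rw [hAim, hCim, hN] at hcross
  have hEsub : ∀ U ∈ E.image π, U.card + 2 = k := by
    intro U hU
    obtain ⟨S, hS, rfl⟩ := Finset.mem_image.1 hU
    obtain ⟨h1, h2, h3⟩ := hEmem S hS
    have h4 : g ∈ S.erase f := Finset.mem_erase.2 ⟨hfg.symm, h3⟩
    rw [hπcard, ← hcard S h1, ← Finset.card_erase_add_one h2, ← Finset.card_erase_add_one h4]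
  obtain ⟨N, hNI⟩ : ∃ N, Fintype.card I = N + 2 := ⟨Fintype.card I - 2, by omega⟩
  rw [hNI] at hcross hN ⊢
  rw [show N + 2 - 2 = N by omega] at hcross hN
  rw [show N + 2 - 1 = N + 1 by omega]
  rcases k with _ | _ | j
  · omega
  · -- for `k = 1` no member can contain both `f` and `g`
    have hE0 : E.card = 0 := by
      rw [← hEim, Finset.card_eq_zero, Finset.eq_empty_iff_forall_notMem]
      intro U hU
      have := hEsub U hU
      omega
    simp at hcross ⊢
    omega
  · have hEle : E.card ≤ N.choose j := by
      rw [← hEim, ← hN, ← Finset.card_univ, ← Finset.card_powersetCard]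
      refine Finset.card_le_card fun U hU => ?_
      have := hEsub U hU
      exact Finset.mem_powersetCard.2 ⟨Finset.subset_univ _, by omega⟩
    rw [show j + 1 + 1 - 1 = j + 1 by omega] at hcross ⊢
    rw [show N + 2 - (j + 1 + 1) - 1 = N - (j + 1) by omega, Nat.choose_succ_succ']
    omega

/-! ### Initial monomials in the exterior algebra -/

section

open Module ExteriorAlgebra

variable {K V I : Type*} [Field K] [AddCommGroup V] [Module K V] [LinearOrder I]
  (b : Basis I K V)

theorem basis_mul_eq_zero {S T : Finset I} (h : ¬ Disjoint S T) :
    b.ExteriorAlgebra S * b.ExteriorAlgebra T = 0 :=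
  basis_mul_of_not_disjoint b (Set.powersetCard.ofCard (rfl : S.card = S.card))
    (Set.powersetCard.ofCard (rfl : T.card = T.card)) h

/-- The scalar `ε` is a sign; only its being nonzero matters here. -/
theorem exists_unit_basis_mul {S T : Finset I} (h : Disjoint S T) :
    ∃ ε : K, ε ≠ 0 ∧ b.ExteriorAlgebra S * b.ExteriorAlgebra T = ε • b.ExteriorAlgebra (S ∪ T) := by
  have := basis_mul_of_disjoint b (Set.powersetCard.ofCard (rfl : S.card = S.card))
    (Set.powersetCard.ofCard (rfl : T.card = T.card)) h
  change b.ExteriorAlgebra S * b.ExteriorAlgebra T =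
    _ • b.ExteriorAlgebra (Finset.disjUnion S T h) at this
  rw [Finset.disjUnion_eq_union] at this
  rcases Int.units_eq_one_or (Set.powersetCard.permOfDisjoint
    (s := Set.powersetCard.ofCard (rfl : S.card = S.card))
    (t := Set.powersetCard.ofCard (rfl : T.card = T.card)) h).sign with h1 | h1
  · exact ⟨1, one_ne_zero, by rw [h1] at this; simpa using this⟩
  · exact ⟨-1, neg_ne_zero.2 one_ne_zero, by rw [h1] at this; simpa using this⟩

theorem repr_basis_mul_basis_eq_zero {S T U : Finset I} (h : Disjoint S T → S ∪ T ≠ U) :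
    b.ExteriorAlgebra.repr (b.ExteriorAlgebra S * b.ExteriorAlgebra T) U = 0 := by
  by_cases hd : Disjoint S T
  · obtain ⟨ε, -, he⟩ := exists_unit_basis_mul b hd
    rw [he, map_smul, Basis.repr_self, Finsupp.smul_apply, Finsupp.single_eq_of_ne (h hd).symm,
      smul_zero]
  · rw [basis_mul_eq_zero b hd, map_zero, Finsupp.zero_apply]

theorem repr_basis_mul_basis_ne_zero {S T : Finset I} (h : Disjoint S T) :
    b.ExteriorAlgebra.repr (b.ExteriorAlgebra S * b.ExteriorAlgebra T) (S ∪ T) ≠ 0 := by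
  obtain ⟨ε, hε, he⟩ := exists_unit_basis_mul b h
  rw [he, map_smul, Basis.repr_self, Finsupp.smul_apply, Finsupp.single_eq_same, smul_eq_mul,
    mul_one]
  exact hε

theorem basis_singleton_s10 (i : I) : b.ExteriorAlgebra {i} = ι K (b i) := by
  rw [basis_apply_ofCard b (Finset.card_singleton i)]
  change ιMulti K (Nat.succ 0) _ = _
  rw [ιMulti_succ_apply, ιMulti_zero_apply, mul_one]
  congr 2
  have := (Set.powersetCard.mem_range_ofFinEmbEquiv_symm_iff_mem
    (Set.powersetCard.ofCard (Finset.card_singleton i)) i).2 (Finset.mem_singleton_self i)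
  obtain ⟨a, ha⟩ := this
  rw [Subsingleton.elim 0 a]
  exact congrArg b ha

/-- `S` indexes the initial monomial of `x` in the basis of the exterior algebra attached to `b`: the
smallest monomial in the colex order with nonzero coefficient. The zero element has none. -/
def IsInitial (x : ExteriorAlgebra K V) (S : Finset I) : Prop :=
  b.ExteriorAlgebra.repr x S ≠ 0 ∧
    ∀ T, b.ExteriorAlgebra.repr x T ≠ 0 → toColex S ≤ toColex T

theorem exists_isInitial {x : ExteriorAlgebra K V} (hx : x ≠ 0) : ∃ S, IsInitial b x S := by
  have hne : (b.ExteriorAlgebra.repr x).support.Nonempty := by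
    rw [Finsupp.support_nonempty_iff]
    exact fun h => hx (b.ExteriorAlgebra.repr.map_eq_zero_iff.1 h)
  obtain ⟨S, hS, h⟩ := Finset.exists_min_image _ (fun T => toColex T) hne
  exact ⟨S, Finsupp.mem_support_iff.1 hS, fun T hT => h T (Finsupp.mem_support_iff.2 hT)⟩

variable [Fintype I]

theorem repr_mul (x y : ExteriorAlgebra K V) (U : Finset I) :
    b.ExteriorAlgebra.repr (x * y) U = ∑ S, ∑ T, b.ExteriorAlgebra.repr x S *
      (b.ExteriorAlgebra.repr y T *
        b.ExteriorAlgebra.repr (b.ExteriorAlgebra S * b.ExteriorAlgebra T) U) := by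
  conv_lhs => rw [← b.ExteriorAlgebra.sum_repr x, ← b.ExteriorAlgebra.sum_repr y]
  simp only [Finset.sum_mul_sum, map_sum, Finsupp.coe_finsetSum, Finset.sum_apply,
    smul_mul_smul_comm, map_smul, Finsupp.smul_apply, smul_eq_mul, mul_assoc]

/-- A monomial of a product that arises from only one pair of monomials of the factors does not
cancel. -/
theorem mul_ne_zero_of_unique {x y : ExteriorAlgebra K V} {S T : Finset I} (hd : Disjoint S T)
    (hx : b.ExteriorAlgebra.repr x S ≠ 0) (hy : b.ExteriorAlgebra.repr y T ≠ 0)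
    (huniq : ∀ S' T', b.ExteriorAlgebra.repr x S' ≠ 0 → b.ExteriorAlgebra.repr y T' ≠ 0 →
      Disjoint S' T' → S' ∪ T' = S ∪ T → S' = S ∧ T' = T) :
    b.ExteriorAlgebra.repr (x * y) (S ∪ T) ≠ 0 := by
  have hz : ∀ S' T', ¬ (S' = S ∧ T' = T) → b.ExteriorAlgebra.repr x S' *
      (b.ExteriorAlgebra.repr y T' *
        b.ExteriorAlgebra.repr (b.ExteriorAlgebra S' * b.ExteriorAlgebra T') (S ∪ T)) = 0 := by
    intro S' T' hne
    by_contra h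
    rw [← ne_eq, mul_ne_zero_iff, mul_ne_zero_iff] at h
    obtain ⟨h1, h2, h3⟩ := h
    refine h3 (repr_basis_mul_basis_eq_zero b fun hd' hU => ?_)
    exact hne (huniq S' T' h1 h2 hd' hU)
  rw [repr_mul, Finset.sum_eq_single S (fun S' _ h => Finset.sum_eq_zero fun T' _ =>
      hz S' T' fun h' => h h'.1) (by simp), Finset.sum_eq_single T
      (fun T' _ h => hz S T' fun h' => h h'.2) (by simp)]
  exact mul_ne_zero hx (mul_ne_zero hy (repr_basis_mul_basis_ne_zero b hd))

theorem repr_ι_mul_ne_zero {x : ExteriorAlgebra K V} {i : I} {S : Finset I} (hi : i ∉ S)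
    (hx : b.ExteriorAlgebra.repr x S ≠ 0) :
    b.ExteriorAlgebra.repr (ι K (b i) * x) (insert i S) ≠ 0 := by
  rw [← basis_singleton_s10, Finset.insert_eq]
  refine mul_ne_zero_of_unique b (Finset.disjoint_singleton_left.2 hi)
    (by simp) hx fun S' T' h1 _ hd hU => ?_
  have hS' : S' = {i} := by
    by_contra h
    exact h1 (by rw [Basis.repr_self, Finsupp.single_eq_of_ne h])
  subst hS'
  refine ⟨rfl, ?_⟩
  rw [Finset.disjoint_singleton_left] at hd
  rw [← Finset.insert_eq, ← Finset.insert_eq] at hU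
  rw [← Finset.erase_insert hd, hU, Finset.erase_insert hi]

theorem ι_mul_eq_zero_s10 {x : ExteriorAlgebra K V} {i : I}
    (h : ∀ S, b.ExteriorAlgebra.repr x S ≠ 0 → i ∈ S) : ι K (b i) * x = 0 := by
  rw [← b.ExteriorAlgebra.sum_repr x, Finset.mul_sum]
  refine Finset.sum_eq_zero fun S _ => ?_
  by_cases hS : b.ExteriorAlgebra.repr x S = 0
  · rw [hS, zero_smul, mul_zero]
  · rw [mul_smul_comm, ← basis_singleton_s10, basis_mul_eq_zero b, smul_zero]
    rw [Finset.disjoint_singleton_left]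
    exact not_not_intro (h S hS)

theorem card_eq_of_repr_ne_zero {k : ℕ} {x : ExteriorAlgebra K V} (hx : x ∈ ⋀[K]^k V)
    {S : Finset I} (hS : b.ExteriorAlgebra.repr x S ≠ 0) : S.card = k := by
  by_contra hne
  refine hS ?_
  have h := congrArg (Submodule.subtype _) ((b.exteriorPower k).sum_repr ⟨x, hx⟩)
  rw [map_sum] at h
  simp only [map_smul, Submodule.subtype_apply, ← basis_eq_coe_basis] at h
  rw [← h, map_sum, Finsupp.coe_finsetSum, Finset.sum_apply]
  refine Finset.sum_eq_zero fun s _ => ?_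
  rw [map_smul, Basis.repr_self, Finsupp.smul_apply, Finsupp.single_eq_of_ne, smul_zero]
  rintro rfl
  exact hne s.2

/-- Multiplicativity of the colex order on squarefree monomials: moving both factors up while keeping
the union of two disjoint sets fixed changes nothing. The largest element at which `S` and `S'`
differ is also the largest at which `T` and `T'` differ, and it is gained by one of `S'`, `T'` and
lost by the other, which then would have moved down. -/
theorem colex_union_unique {S T S' T' : Finset I} (hd : Disjoint S T) (hd' : Disjoint S' T')
    (hU : S' ∪ T' = S ∪ T) (hS : toColex S ≤ toColex S') (hT : toColex T ≤ toColex T') :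
    S' = S ∧ T' = T := by
  rw [Finset.Colex.toColex_le_toColex] at hS hT
  rw [Finset.disjoint_left] at hd hd'
  have hmem (i : I) : i ∈ S' ∨ i ∈ T' ↔ i ∈ S ∨ i ∈ T := by
    simpa using Finset.ext_iff.1 hU i
  have hSS : S' = S := by
    by_contra hne
    have hD : (symmDiff S S').Nonempty := by
      rw [Finset.nonempty_iff_ne_empty, ← Finset.bot_eq_empty, Ne, symmDiff_eq_bot]
      exact fun h => hne h.symm
    obtain ⟨d, hd1, hmax⟩ := (symmDiff S S').exists_max_image id hD
    simp only [Finset.mem_symmDiff, id] at hd1 hmax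
    rcases hd1 with ⟨h1, h2⟩ | ⟨h1, h2⟩
    · obtain ⟨c, hc1, hc2, hc3⟩ := hS h1 h2
      have := le_antisymm hc3 (hmax c (Or.inr ⟨hc1, hc2⟩))
      subst this
      exact h2 hc1
    · have hdT : d ∈ T := ((hmem d).1 (Or.inl h1)).resolve_left h2
      obtain ⟨c, hc1, hc2, hc3⟩ := hT hdT (hd' h1)
      have hcS : c ∈ S := ((hmem c).1 (Or.inr hc1)).resolve_right hc2
      have := le_antisymm hc3 (hmax c (Or.inl ⟨hcS, fun h => hd' h hc1⟩))
      subst this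
      exact h2 hcS
  subst hSS
  refine ⟨rfl, Finset.ext fun i => ?_⟩
  have h1 := hmem i
  have h2 := @hd i
  have h3 := @hd' i
  tauto

/-- If the initial monomials were disjoint, their product would be the initial monomial of `x * y`. -/
theorem IsInitial.not_disjoint {x y : ExteriorAlgebra K V} {S T : Finset I}
    (hS : IsInitial b x S) (hT : IsInitial b y T) (hxy : x * y = 0) : ¬ Disjoint S T := by
  intro hd
  refine mul_ne_zero_of_unique b hd hS.1 hT.1 (fun S' T' h1 h2 hd' hU => ?_)
    (by rw [hxy, map_zero, Finsupp.zero_apply])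
  exact colex_union_unique hd hd' hU (hS.2 S' h1) (hT.2 T' h2)

/-- The coordinates indexed by initial monomials of elements of `L` separate the points of `L`. -/
theorem finrank_le_card_initial (L : Submodule K (ExteriorAlgebra K V)) (F : Finset (Finset I))
    (hF : ∀ x ∈ L, ∀ S, IsInitial b x S → S ∈ F) : finrank K L ≤ F.card := by
  let φ : L →ₗ[K] (F → K) := LinearMap.pi fun S => b.ExteriorAlgebra.coord S.1 ∘ₗ L.subtype
  have hφ : Function.Injective φ := by
    rw [injective_iff_map_eq_zero]
    intro x hx
    by_contra hne
    obtain ⟨S, hS⟩ := exists_isInitial b (x := x) (by simpa using hne)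
    exact hS.1 (congrFun hx ⟨S, hF x x.2 S hS⟩)
  simpa using LinearMap.finrank_le_finrank_of_injective hφ
/-- The vector `f` gets the largest index and `g` the second largest. -/
theorem exists_basis_extending_pair {K V : Type*} [Field K] [AddCommGroup V] [Module K V]
    [FiniteDimensional K V] (f g : V) (hfg : LinearIndependent K ![f, g]) :
    ∃ (N : ℕ) (b : Basis (Fin (N + 2)) K V), b (Fin.natAdd N 1) = f ∧ b (Fin.natAdd N 0) = g := by
  have hgf := LinearIndependent.pair_symm_iff.1 hfg
  obtain ⟨W, hW⟩ := Submodule.exists_isCompl (Submodule.span K (Set.range ![g, f]))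
  let c := (((finBasis K W).prod (Basis.span hgf)).map
    (Submodule.prodEquivOfIsCompl _ _ hW.symm)).reindex finSumFinEquiv
  have hc (i : Fin 2) : c (Fin.natAdd _ i) = ![g, f] i := by
    rw [Basis.reindex_apply, finSumFinEquiv_symm_apply_natAdd, Basis.map_apply]
    simp [Basis.prod_apply, Submodule.coe_prodEquivOfIsCompl', Basis.span_apply]
  exact ⟨_, c, hc 1, hc 0⟩

end

/-! ### The dimension bound -/


/-- Lemma 5.1 (main technical lemma): a nontrivially self-annihilating subspace `L` of
`⋀^k V` that is annihilated by `f ∧ g` and contains an element annihilated by `f` but not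
by `g` satisfies the Hilton–Milner bound. -/
theorem hilton_milner_exterior_two_form (𝔽 : Type*) [Field 𝔽] (hchar : (2 : 𝔽) ≠ 0)
    (V : Type*) [AddCommGroup V] [Module 𝔽 V] [FiniteDimensional 𝔽 V]
    (n k : ℕ) (hdim : Module.finrank 𝔽 V = n) (hk : 0 < k) (hkn : 2 * k ≤ n)
    (f g : V) (hfg : LinearIndependent 𝔽 ![f, g])
    (L : Submodule 𝔽 (ExteriorAlgebra 𝔽 V)) (hL : L ≤ ⋀[𝔽]^k V)
    (hann : ∀ x ∈ L, ∀ y ∈ L, x * y = 0)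
    (hnontriv : ¬ ∃ v : V, v ≠ 0 ∧ ∀ x ∈ L, ExteriorAlgebra.ι 𝔽 v * x = 0)
    (h2ann : ∀ x ∈ L, ExteriorAlgebra.ι 𝔽 f * (ExteriorAlgebra.ι 𝔽 g * x) = 0)
    (hpartial : ∃ m ∈ L, ExteriorAlgebra.ι 𝔽 f * m = 0 ∧ ExteriorAlgebra.ι 𝔽 g * m ≠ 0) :
    Module.finrank 𝔽 L ≤ (n - 1).choose (k - 1) - (n - k - 1).choose (k - 1) + 1 := by
  classical
  have hf0 : f ≠ 0 := hfg.ne_zero 0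
  obtain ⟨N, b, rfl, rfl⟩ := exists_basis_extending_pair f g hfg
  have hn : Fintype.card (Fin (N + 2)) = n := by
    rw [← hdim, Module.finrank_eq_card_basis b]
  set p : Fin (N + 2) := Fin.natAdd N 1 with hp
  set q : Fin (N + 2) := Fin.natAdd N 0 with hq
  have hpq : p ≠ q := by simp [hp, hq, Fin.ext_iff]
  have hple (i : Fin (N + 2)) (h : p ≤ i) : i = p := by
    rw [Fin.le_def] at h
    have : (p : ℕ) = N + 1 := by simp [hp]
    exact Fin.ext (by omega)
  have hqle (i : Fin (N + 2)) (h : q ≤ i) : i = q ∨ i = p := by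
    rw [Fin.le_def] at h
    have h1 : (p : ℕ) = N + 1 := by simp [hp]
    have h2 : (q : ℕ) = N := by simp [hq]
    rw [Fin.ext_iff, Fin.ext_iff]
    omega
  let F : Finset (Finset (Fin (N + 2))) := Finset.univ.filter fun S => ∃ x ∈ L, IsInitial b x S
  have hF (S) : S ∈ F ↔ ∃ x ∈ L, IsInitial b x S := by simp [F]
  refine (finrank_le_card_initial b L F fun x hx S hS => (hF S).2 ⟨x, hx, hS⟩).trans ?_
  rw [← hn]
  -- The goals below: members have size `k`, they intersect pairwise, they meet `{p, q}`, one contains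
  -- `p` but not `q`, and one does not contain `p`.
  refine card_intersecting_two_cover_le k hk (by omega) p q hpq F ?_ ?_ ?_ ?_ ?_
  · intro S hS
    obtain ⟨x, hx, hS⟩ := (hF S).1 hS
    exact card_eq_of_repr_ne_zero b (hL hx) hS.1
  · intro S hS T hT
    obtain ⟨x, hx, hS⟩ := (hF S).1 hS
    obtain ⟨y, hy, hT⟩ := (hF T).1 hT
    exact hS.not_disjoint b hT (hann x hx y hy)
  · intro S hS
    obtain ⟨x, hx, hS⟩ := (hF S).1 hS
    by_contra! h
    refine repr_ι_mul_ne_zero b (i := p) (S := insert q S) ?_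
      (repr_ι_mul_ne_zero b h.2 hS.1) (by rw [h2ann x hx, map_zero, Finsupp.zero_apply])
    rw [Finset.mem_insert, not_or]
    exact ⟨hpq, h.1⟩
  · obtain ⟨m, hm, hfm, hgm⟩ := hpartial
    obtain ⟨S, hS⟩ := exists_isInitial b (x := m) (by rintro rfl; simp at hgm)
    have hall : ∀ T, b.ExteriorAlgebra.repr m T ≠ 0 → p ∈ T := by
      intro T hT
      by_contra h
      exact repr_ι_mul_ne_zero b h hT (by rw [hfm, map_zero, Finsupp.zero_apply])
    -- All monomials of `m` contain `p`, and `q` is the next index below `p`, so those avoiding `q`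
    -- come first.
    refine ⟨S, (hF S).2 ⟨m, hm, hS⟩, hall S hS.1, fun hqS => hgm ?_⟩
    refine ι_mul_eq_zero_s10 b fun T hT => ?_
    by_contra hqT
    obtain ⟨c, hcT, hcS, hc⟩ := Finset.Colex.toColex_le_toColex.1 (hS.2 T hT) hqS hqT
    rcases hqle c hc with rfl | rfl
    · exact hqT hcT
    · exact hcS (hall S hS.1)
  · by_contra! h
    refine hnontriv ⟨b p, hf0, fun x hx => ?_⟩
    -- Since `p` is the top index, an initial monomial containing `p` forces every monomial to.
    by_cases hx0 : x = 0
    · rw [hx0, mul_zero]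
    obtain ⟨S, hS⟩ := exists_isInitial b hx0
    refine ι_mul_eq_zero_s10 b fun T hT => ?_
    by_contra hpT
    obtain ⟨c, hcT, -, hc⟩ := Finset.Colex.toColex_le_toColex.1 (hS.2 T hT)
      (h S ((hF S).2 ⟨x, hx, hS⟩)) hpT
    exact hpT (hple c hc ▸ hcT)
end

section
/- Let 𝔽 be a field of characteristic different from 2, let V be an n-dimensional 𝔽-vector space, and let k be an integer with 2 ≤ k ≤ n/2. Let f, g ∈ V be linearly independent 1-forms and let ℓ ∈ V be a 1-form. Suppose L is a subspace of ⋀^k V such that f ∧ g ∧ z ∈ L for every z ∈ ⋀^{k−2} V, and ℓ ∧ x = 0 for all x ∈ L. Then ℓ lies in the span of {f, g}. -/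
/-!
If `ℓ` were outside `span {f, g}`, then `ℓ, f, g` would be linearly independent. Since
`k + 1 ≤ 2 * k ≤ n`, they extend to a linearly independent family `ℓ, f, g, w₁, …, w_{k-2}`, whose
exterior product is nonzero (`ιMulti_ne_zero_of_linearIndependent`). But that product is
`ℓ ∧ (f ∧ g ∧ z)` with `z = w₁ ∧ ⋯ ∧ w_{k-2}`, and `f ∧ g ∧ z ∈ L` is annihilated by `ℓ`.
-/

theorem ιMulti_ne_zero_of_linearIndependent {K E : Type*} [Field K] [AddCommGroup E] [Module K E]
    {m : ℕ} {v : Fin m → E} (hv : LinearIndependent K v) :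
    ExteriorAlgebra.ιMulti K m v ≠ 0 := by
  intro h
  -- Among the `m`-fold products of `v`, consider the one indexed by all of `Fin m`.
  apply (exteriorPower.ιMulti_family_linearIndependent_field (n := m) hv).ne_zero
    (Set.powersetCard.ofFinEmbEquiv (RelEmbedding.refl _))
  apply Subtype.ext
  rw [exteriorPower.ιMulti_family_apply_coe, ExteriorAlgebra.ιMulti_family,
    Equiv.symm_apply_apply]
  exact h

theorem exists_linearIndependent_extend_triple {K E : Type*} [Field K] [AddCommGroup E]
    [Module K E] {a b c : E} (h : LinearIndependent K ![a, b, c]) (p : ℕ)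
    (hp : p + 3 ≤ Module.finrank K E) :
    ∃ u : Fin (p + 3) → E, LinearIndependent K u ∧ u 0 = a ∧ u 1 = b ∧ u 2 = c := by
  induction p with
  | zero => exact ⟨![a, b, c], h, rfl, rfl, rfl⟩
  | succ p ih =>
    obtain ⟨u, hu, h0, h1, h2⟩ := ih (by omega)
    have : Module.Finite K E := Module.finite_of_finrank_pos (by omega)
    obtain ⟨x, hx⟩ := exists_linearIndependent_snoc_of_lt_finrank hu (by omega)
    refine ⟨Fin.snoc u x, hx, ?_, ?_, ?_⟩
    · rw [← h0]; exact Fin.snoc_castSucc (α := fun _ => E) x u 0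
    · rw [← h1]; exact Fin.snoc_castSucc (α := fun _ => E) x u 1
    · rw [← h2]; exact Fin.snoc_castSucc (α := fun _ => E) x u 2


/-- Lemma 5.3: if `L ⊆ ⋀^k V` contains `f ∧ g ∧ ⋀^{k-2} V` for linearly independent
`1`-forms `f, g`, and the `1`-form `ℓ` annihilates `L`, then `ℓ ∈ span {f, g}`. -/
theorem annihilating_one_form_in_span (𝔽 : Type*) [Field 𝔽] (hchar : (2 : 𝔽) ≠ 0)
    (V : Type*) [AddCommGroup V] [Module 𝔽 V] [FiniteDimensional 𝔽 V]
    (n k : ℕ) (hdim : Module.finrank 𝔽 V = n) (hk2 : 2 ≤ k) (hkn : 2 * k ≤ n)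
    (f g ℓ : V) (hfg : LinearIndependent 𝔽 ![f, g])
    (L : Submodule 𝔽 (ExteriorAlgebra 𝔽 V)) (hL : L ≤ ⋀[𝔽]^k V)
    (hcontain : ∀ z ∈ ⋀[𝔽]^(k - 2) V,
      ExteriorAlgebra.ι 𝔽 f * (ExteriorAlgebra.ι 𝔽 g * z) ∈ L)
    (hann : ∀ x ∈ L, ExteriorAlgebra.ι 𝔽 ℓ * x = 0) :
    ℓ ∈ Submodule.span 𝔽 {f, g} := by
  by_contra hℓ
  have h3 : LinearIndependent 𝔽 ![ℓ, f, g] :=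
    linearIndependent_finCons.2 ⟨hfg, by simpa [Matrix.range_cons, Set.pair_comm] using hℓ⟩
  obtain ⟨p, rfl⟩ : ∃ p, k = p + 2 := ⟨k - 2, by omega⟩
  obtain ⟨u, hu, rfl, rfl, rfl⟩ := exists_linearIndependent_extend_triple h3 p (by omega)
  apply ιMulti_ne_zero_of_linearIndependent hu
  rw [ExteriorAlgebra.ιMulti_succ_apply, ExteriorAlgebra.ιMulti_succ_apply,
    ExteriorAlgebra.ιMulti_succ_apply]
  exact hann _ (hcontain _ (ExteriorAlgebra.ιMulti_range 𝔽 p (Set.mem_range_self _)))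
end
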